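/- Let X be a set of regular infinite cardinality. The precomplete clones on X that contain all permutations but not all unary operations are exactly the clones Pol(G) for G ∈ {A, B, E, F} ∪ {G_λ : λ a cardinal, 1 ≤ λ ≤ |X|}, where A = {f ∈ O^(1) : |f⁻¹[{y}]| < |X| for all but fewer than |X| many y ∈ X}, B = {f ∈ O^(1) : |f⁻¹[{y}]| < |X| for all y ∈ X}, E = {f ∈ O^(1) : |X ∖ f[X]| < |X|}, F = {f ∈ O^(1) : |X ∖ f[X]| < |X| or f is constant}, and G_λ = {f ∈ O^(1) : |X ∖ f[X ∖ A]| ≥ λ for all A ⊆ X with |A| = λ}. -/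

import Mathlib

universe u v

open Cardinal

/-- The set of all finitary operations on `X`: an `n`-th component element is an
operation of arity `n + 1` (so all arities are `≥ 1`). -/
abbrev Ops (X : Type u) : Type u := Σ n : ℕ, ((Fin (n + 1) → X) → X)

/-- A clone: contains all projections and is closed under composition. -/
def IsClone {X : Type u} (C : Set (Ops X)) : Prop :=
  (∀ (n : ℕ) (k : Fin (n + 1)), (⟨n, fun x => x k⟩ : Ops X) ∈ C) ∧
  ∀ (n m : ℕ) (f : (Fin (n + 1) → X) → X), (⟨n, f⟩ : Ops X) ∈ C →
    ∀ g : Fin (n + 1) → ((Fin (m + 1) → X) → X), (∀ i, (⟨m, g i⟩ : Ops X) ∈ C) →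
      (⟨m, fun x => f fun i => g i x⟩ : Ops X) ∈ C

/-- The clone generated by a set of operations. -/
def cloneGen {X : Type u} (F : Set (Ops X)) : Set (Ops X) :=
  ⋂₀ {C : Set (Ops X) | IsClone C ∧ F ⊆ C}

/-- A precomplete (maximal) clone. -/
def IsPrecompleteClone {X : Type u} (C : Set (Ops X)) : Prop :=
  IsClone C ∧ C ≠ Set.univ ∧ ∀ f : Ops X, f ∉ C → cloneGen (insert f C) = Set.univ

/-- A unary function, viewed as a unary operation in `Ops X`. -/
def unaryOp {X : Type u} (F : X → X) : Ops X := ⟨0, fun x => F (x 0)⟩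

/-- The polymorphism clone of a set of binary operations. -/
def Pol2 {X : Type u} (H : Set (X → X → X)) : Set (Ops X) :=
  {f : Ops X | ∀ g : Fin (f.1 + 1) → (X → X → X), (∀ i, g i ∈ H) →
    (fun x y => f.2 fun i => g i x y) ∈ H}

/-- Polymorphisms of a set of unary functions. -/
def Pol1 {X : Type u} (G : Set (X → X)) : Set (Ops X) :=
  {f : Ops X | ∀ g : Fin (f.1 + 1) → (X → X), (∀ i, g i ∈ G) →
    (fun x => f.2 fun i => g i x) ∈ G}

def monA (X : Type u) : Set (X → X) :=
  {f | #{y : X | ¬ #(f ⁻¹' {y}) < #X} < #X}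

def monB (X : Type u) : Set (X → X) :=
  {f | ∀ y : X, #(f ⁻¹' {y}) < #X}

def monE (X : Type u) : Set (X → X) :=
  {f | #((Set.range f)ᶜ : Set X) < #X}

def monF (X : Type u) : Set (X → X) :=
  {f | #((Set.range f)ᶜ : Set X) < #X ∨ ∃ c : X, ∀ x, f x = c}

def monG (X : Type u) (lam : Cardinal.{u}) : Set (X → X) :=
  {f | ∀ A : Set X, #A = lam → lam ≤ #((f '' Aᶜ)ᶜ : Set X)}

/-!
Let `C` be a clone containing all permutations. Its large-fibred unary members, those all of whose
nonempty fibres have size `|X|`, are determined by their ranges. If `C` is contained in none of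
the clones `Pol1 G`, then the failures to preserve `A` and `B` yield a large-fibred member with
range of size `|X|`; the failures to preserve the `G_λ` shrink the complement of the range until
it is empty; and the failures to preserve `E` and `F` yield a range with at least two points and
complement of size `|X|`. If moreover `C` has a member that is not almost unary, then all
large-fibred maps and some injection whose range has complement of size `|X|` belong to `C`, and
every unary operation is composed of a large-fibred map, a permutation and that injection.

The almost unary operations form a proper clone containing all unary operations, so a precomplete
clone with all permutations but not all unary operations must be one of the `Pol1 G`. Conversely,
each `Pol1 G` contains a binary operation that is injective on a large square; this operation is
not almost unary, and together with the unary operations it generates everything. As the clones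
`Pol1 G` are pairwise incomparable, every clone properly above one of them therefore is the clone
of all operations.
-/

open Set Function

section Cardinals

variable {α β ι : Type u} {J : Type*} [Finite J] {κ : Cardinal.{u}} {s t : Set α}

theorem mk_union_lt (hκ : ℵ₀ ≤ κ) (hs : #s < κ) (ht : #t < κ) : #(s ∪ t : Set α) < κ :=
  (mk_union_le s t).trans_lt (add_lt_of_lt hκ hs ht)

theorem le_mk_sdiff (hκ : ℵ₀ ≤ κ) (hs : κ ≤ #s) (ht : #t < κ) : κ ≤ #(s \ t : Set α) := by
  contrapose! hs
  exact (mk_le_mk_of_subset (subset_sdiff_union s t)).trans_lt (mk_union_lt hκ hs ht)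

theorem nonempty_of_le_mk (hκ : ℵ₀ ≤ κ) (hs : κ ≤ #s) : s.Nonempty :=
  nonempty_coe_sort.1 (mk_ne_zero_iff.1 (aleph0_pos.trans_le (hκ.trans hs)).ne')

theorem mk_iUnion_lt_of_finite (hκ : ℵ₀ ≤ κ) {s : J → Set α} (h : ∀ j, #(s j) < κ) :
    #(⋃ j, s j : Set α) < κ := by
  classical
  have := Fintype.ofFinite J
  have key (F : Finset J) : #(⋃ j ∈ F, s j : Set α) < κ := by
    induction F using Finset.induction_on with
    | empty => simpa using aleph0_pos.trans_le hκ
    | insert j F _ ih =>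
      rw [Finset.set_biUnion_insert]
      exact mk_union_lt hκ (h j) ih
  simpa using key Finset.univ

theorem mk_preimage_lt (hκ : κ.IsRegular) {f : α → β} {s : Set β} (hs : #s < κ)
    (hf : ∀ y ∈ s, #(f ⁻¹' {y}) < κ) : #(f ⁻¹' s) < κ := by
  rw [← biUnion_preimage_singleton]
  exact (card_biUnion_lt_iff_forall_of_isRegular hκ hs).2 hf

theorem exists_subset_mk_eq_le_mk_sdiff (hκ : ℵ₀ ≤ κ) (hs : κ ≤ #s) {l : Cardinal} (hl : l ≤ κ) :
    ∃ t ⊆ s, #t = l ∧ κ ≤ #(s \ t : Set α) := by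
  obtain ⟨e⟩ : Nonempty (s ⊕ s ≃ s) := Cardinal.eq.1 <| by simp [add_eq_self (hκ.trans hs)]
  have inl_inj : Injective fun x => (e (.inl x) : α) :=
    Subtype.val_injective.comp (e.injective.comp Sum.inl_injective)
  have inr_inj : Injective fun x => (e (.inr x) : α) :=
    Subtype.val_injective.comp (e.injective.comp Sum.inr_injective)
  obtain ⟨t, ht, rfl⟩ := le_mk_iff_exists_subset.1 <|
    hl.trans (hs.trans (mk_range_eq _ inl_inj).ge)
  refine ⟨t, ht.trans (range_subset_iff.2 fun x => (e _).2), rfl, hs.trans ?_⟩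
  refine (mk_range_eq _ inr_inj).ge.trans (mk_le_mk_of_subset (range_subset_iff.2 fun x => ?_))
  refine ⟨(e _).2, fun hx => ?_⟩
  obtain ⟨y, hy⟩ := ht hx
  exact Sum.inl_ne_inr (e.injective (Subtype.ext hy))

theorem exists_mk_eq_le_mk_compl [Infinite α] {l : Cardinal} (hs : l ≤ #s) (hl : l ≤ #α) :
    ∃ t ⊆ s, #t = l ∧ #α ≤ #(tᶜ : Set α) := by
  rcases hl.lt_or_eq with hl | rfl
  · obtain ⟨t, hts, rfl⟩ := le_mk_iff_exists_subset.1 hs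
    exact ⟨t, hts, rfl, (mk_compl_of_infinite t hl).ge⟩
  · obtain ⟨t, hts, ht, hst⟩ := exists_subset_mk_eq_le_mk_sdiff (aleph0_le_mk α) hs le_rfl
    exact ⟨t, hts, ht, hst.trans (mk_le_mk_of_subset fun _ hx => hx.2)⟩

theorem exists_injective_le_mk_compl_range [Infinite α] (h : #ι ≤ #α) :
    ∃ j : ι → α, Injective j ∧ #α ≤ #((range j)ᶜ : Set α) := by
  obtain ⟨t, -, ht, htc⟩ := exists_subset_mk_eq_le_mk_sdiff (aleph0_le_mk α) (mk_univ (α := α)).ge h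
  obtain ⟨e⟩ := Cardinal.eq.1 ht.symm
  refine ⟨Subtype.val ∘ e, Subtype.val_injective.comp e.injective, ?_⟩
  rwa [e.surjective.range_comp, Subtype.range_coe, compl_eq_univ_sdiff]

theorem mk_prod_eq_left [Infinite α] [Nonempty β] (h : #β ≤ #α) : #(α × β) = #α := by
  simpa using mul_eq_left (aleph0_le_mk α) h (mk_ne_zero β)

theorem mk_finite_prod {J : Type} [Finite J] [Nonempty J] [Infinite α] : #(J × α) = #α := by
  have hJ : lift.{u} #J ≤ #α :=
    (lift_lt_aleph0.2 (lt_aleph0_of_finite J)).le.trans (aleph0_le_mk α)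
  rw [mk_prod, lift_uzero]
  exact mul_eq_right (aleph0_le_mk α) hJ (by simp)

theorem mk_finite_fun {J : Type} [Finite J] [Nonempty J] [Infinite α] : #(J → α) = #α := by
  rw [mk_pi, prod_const, lift_uzero, ← Nat.cast_card (α := J), lift_natCast, power_natCast]
  exact power_nat_eq (aleph0_le_mk α) Nat.card_pos

theorem exists_mem_forall_notMem_of_mk_fiber_lt (hκ : κ.IsRegular) {T : Set α} (hT : κ ≤ #T)
    {g : J → α → β} (hg : ∀ j y, #(T ∩ g j ⁻¹' {y} : Set α) < κ) {S : Set β} (hS : #S < κ) :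
    ∃ t ∈ T, ∀ j, g j t ∉ S := by
  have hbad (j) : #(T ∩ g j ⁻¹' S : Set α) < κ := by
    rw [← biUnion_preimage_singleton, inter_iUnion₂]
    exact (card_biUnion_lt_iff_forall_of_isRegular hκ hS).2 fun y _ => hg j y
  obtain ⟨t, htT, ht⟩ := sdiff_nonempty_of_mk_lt_mk <|
    (mk_iUnion_lt_of_finite hκ.aleph0_le hbad).trans_le hT
  exact ⟨t, htT, fun j hj => ht (mem_iUnion.2 ⟨j, htT, hj⟩)⟩

theorem exists_forall_mem_injective_comp (hκ : κ.IsRegular) (hι : #ι ≤ κ) {T : ι → Set α}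
    {g : J → α → β} (h : ∀ ξ, ∀ S : Set β, #S < κ → ∃ t ∈ T ξ, ∀ j, g j t ∉ S) :
    ∃ τ : ι → α, (∀ ξ, τ ξ ∈ T ξ) ∧ ∀ j, Injective (g j ∘ τ) := by
  obtain ⟨r, wo, hr⟩ := exists_ord_eq ι
  have mk_lt (ξ) : #{η | r η ξ} < κ := (card_typein_lt ξ hr).trans_le hι
  have extend (ξ) (τ : ∀ η, r η ξ → α) :
      ∃ t ∈ T ξ, ∀ j i η hη, g j t ≠ g i (τ η hη) := by
    have small : #(⋃ i, range fun η : {η | r η ξ} => g i (τ η η.2) : Set β) < κ :=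
      mk_iUnion_lt_of_finite hκ.aleph0_le fun i => mk_range_le.trans_lt (mk_lt ξ)
    obtain ⟨t, ht, havoid⟩ := h ξ _ small
    exact ⟨t, ht, fun j i η hη he => havoid j (mem_iUnion.2 ⟨i, ⟨η, hη⟩, he.symm⟩)⟩
  choose F hFT hF using extend
  let τ : ι → α := wo.wf.fix F
  have hτ (ξ) : τ ξ = F ξ fun η _ => τ η := wo.wf.fix_eq F ξ
  have ne_of_lt {ξ η} (hlt : r ξ η) (j) : g j (τ η) ≠ g j (τ ξ) := by
    rw [hτ η]
    exact hF η (fun η _ => τ η) j j ξ hlt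
  refine ⟨τ, fun ξ => hτ ξ ▸ hFT _ _, fun j ξ η he => ?_⟩
  rcases trichotomous_of r ξ η with hlt | heq | hgt
  · exact (ne_of_lt hlt j he.symm).elim
  · exact heq
  · exact (ne_of_lt hgt j he).elim

-- Selecting along `ι × Bool` and keeping one half leaves the values of the other half uncovered.
theorem exists_forall_mem_injective_comp_le_mk_compl (hκ : κ.IsRegular) (hι : #ι = κ)
    {T : ι → Set α} {g : J → α → β}
    (h : ∀ ξ, ∀ S : Set β, #S < κ → ∃ t ∈ T ξ, ∀ j, g j t ∉ S) :
    ∃ τ : ι → α, (∀ ξ, τ ξ ∈ T ξ) ∧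
      ∀ j, Injective (g j ∘ τ) ∧ κ ≤ #((range (g j ∘ τ))ᶜ : Set β) := by
  have : Infinite ι := infinite_iff.2 (hι ▸ hκ.aleph0_le)
  have hcard : #(ι × ULift.{u} Bool) ≤ κ :=
    (mk_prod_eq_left (mk_lt_aleph0.le.trans (aleph0_le_mk ι))).trans_le hι.le
  obtain ⟨τ, hT, hinj⟩ := exists_forall_mem_injective_comp hκ hcard (T := fun p => T p.1)
    (g := g) fun p => h p.1
  have half_inj (b) (j) : Injective fun ξ => g j (τ (ξ, b)) :=
    (hinj j).comp (Prod.mk_left_injective b)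
  refine ⟨fun ξ => τ (ξ, ⟨true⟩), fun ξ => hT (ξ, ⟨true⟩), fun j => ⟨half_inj _ j, ?_⟩⟩
  rw [← hι, ← mk_range_eq _ (half_inj ⟨false⟩ j)]
  refine mk_le_mk_of_subset ?_
  rintro _ ⟨ξ, rfl⟩ ⟨η, hη⟩
  simpa using hinj j hη

theorem exists_forall_mem_injective_comp_of_le_mk_image (hκ : κ.IsRegular) (hι : #ι = κ)
    {T : ι → Set α} {g : α → β} (h : ∀ ξ, κ ≤ #(g '' T ξ)) :
    ∃ τ : ι → α, (∀ ξ, τ ξ ∈ T ξ) ∧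
      Injective (g ∘ τ) ∧ κ ≤ #((range (g ∘ τ))ᶜ : Set β) := by
  obtain ⟨τ, hτT, hτ⟩ := exists_forall_mem_injective_comp_le_mk_compl hκ hι
    (g := fun _ : Unit => g) fun ξ S hS => by
      obtain ⟨_, ⟨t, ht, rfl⟩, htS⟩ := sdiff_nonempty_of_mk_lt_mk (hS.trans_le (h ξ))
      exact ⟨t, ht, fun _ => htS⟩
  exact ⟨τ, hτT, hτ ()⟩

end Cardinals

section Permutations

variable {X ι : Type u}

theorem mk_eq_of_le_mk {s : Set X} (hs : #X ≤ #s) : #s = #X :=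
  (mk_set_le s).antisymm hs

theorem exists_perm_comp_eq {a b : ι → X} (ha : Injective a) (hb : Injective b)
    (h : #((range a)ᶜ : Set X) = #((range b)ᶜ : Set X)) : ∃ γ : Equiv.Perm X, γ ∘ a = b := by
  let b' : range a ↪ X := ⟨b ∘ (Equiv.ofInjective a ha).symm, hb.comp (Equiv.injective _)⟩
  have range_b' : range b' = range b := (Equiv.ofInjective a ha).symm.surjective.range_comp b
  obtain ⟨γ, hγ⟩ := extend_function b' (range_b' ▸ Cardinal.eq.1 h)
  refine ⟨γ, funext fun x => (hγ ⟨a x, x, rfl⟩).trans ?_⟩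
  exact congrArg b (Equiv.ofInjective_symm_apply ha x)

theorem exists_perm_comp_eq_of_le_mk_compl {a b : ι → X} (ha : Injective a) (hb : Injective b)
    (ha' : #X ≤ #((range a)ᶜ : Set X)) (hb' : #X ≤ #((range b)ᶜ : Set X)) :
    ∃ γ : Equiv.Perm X, γ ∘ a = b :=
  exists_perm_comp_eq ha hb ((mk_eq_of_le_mk ha').trans (mk_eq_of_le_mk hb').symm)

theorem exists_perm_image_eq {R S : Set X} (h : #R = #S)
    (h' : #(Rᶜ : Set X) = #(Sᶜ : Set X)) : ∃ γ : Equiv.Perm X, γ '' R = S := by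
  obtain ⟨e⟩ := Cardinal.eq.1 h
  have range_e : range (Subtype.val ∘ e) = S := by
    rw [e.surjective.range_comp, Subtype.range_coe]
  obtain ⟨γ, hγ⟩ := exists_perm_comp_eq Subtype.val_injective
    (Subtype.val_injective.comp e.injective) (by rwa [Subtype.range_coe, range_e])
  exact ⟨γ, by rw [← range_e, ← hγ, range_comp, Subtype.range_coe]⟩

end Permutations

/-- A map is large-fibred if each of its nonempty fibres has the cardinality of the whole domain.
Up to a bijection of the domain, such a map is determined by its range. -/
def LargeFibred {α β : Type u} (t : α → β) : Prop :=
  ∀ a, #α ≤ #(t ⁻¹' {t a})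

section LargeFibred

variable {α β γ ι : Type u} {t : α → β}

namespace LargeFibred

theorem comp (ht : LargeFibred t) (f : β → γ) : LargeFibred (f ∘ t) := fun a =>
  (ht a).trans (mk_le_mk_of_subset fun _ hb => congrArg f hb)

theorem comp_equiv (ht : LargeFibred t) (e : ι ≃ α) : LargeFibred (t ∘ e) := fun a => by
  rw [mk_congr e, preimage_comp, ← e.image_symm_eq_preimage, mk_image_eq e.symm.injective]
  exact ht (e a)

theorem snd [Infinite α] (h : #ι ≤ #α) : LargeFibred (Prod.snd : α × ι → ι) := fun p => by
  have : Nonempty ι := ⟨p.2⟩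
  rw [mk_prod_eq_left h]
  refine mk_le_of_injective (f := fun a => ⟨(a, p.2), rfl⟩) fun a b hab => ?_
  exact congrArg Prod.fst (Subtype.ext_iff.1 hab)

theorem exists_comp_equiv_eq {t' : ι → β} (ht : LargeFibred t) (ht' : LargeFibred t')
    (hcard : #ι = #α) (hrange : range t = range t') : ∃ e : ι ≃ α, t ∘ e = t' := by
  have fibers (b) : Nonempty ({x // t' x = b} ≃ {a // t a = b}) := by
    by_cases hb : b ∈ range t
    · obtain ⟨x, rfl⟩ := hrange ▸ hb
      obtain ⟨a, ha⟩ := hb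
      refine Cardinal.eq.1 <| (mk_eq_of_le_mk (ht' x)).trans <| hcard.trans ?_
      exact ha ▸ (mk_eq_of_le_mk (ht a)).symm
    · have : IsEmpty {a // t a = b} := ⟨fun a => hb ⟨a, a.2⟩⟩
      have : IsEmpty {x // t' x = b} := ⟨fun x => hb (hrange ▸ ⟨x, x.2⟩)⟩
      exact ⟨Equiv.equivOfIsEmpty _ _⟩
  let e := (Equiv.sigmaFiberEquiv t').symm.trans
    ((Equiv.sigmaCongrRight fun b => (fibers b).some).trans (Equiv.sigmaFiberEquiv t))
  exact ⟨e, funext fun x => ((fibers (t' x)).some ⟨x, rfl⟩).2⟩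

theorem exists_lift [Infinite α] (ht : LargeFibred t) (hι : #ι ≤ #α) {ψ : ι → β}
    (hψ : range ψ ⊆ range t) :
    ∃ φ : ι → α, Injective φ ∧ #α ≤ #((range φ)ᶜ : Set α) ∧ t ∘ φ = ψ := by
  have hrange : #(range t) ≤ #α := mk_range_le
  have : Nonempty (range t) := (range_nonempty t).to_subtype
  obtain ⟨e, he⟩ := ht.exists_comp_equiv_eq ((snd hrange).comp Subtype.val)
    (mk_prod_eq_left hrange) <| by
      rw [range_comp, Prod.snd_surjective.range_eq, image_univ, Subtype.range_coe]
  obtain ⟨j, hj, hjc⟩ := exists_injective_le_mk_compl_range hι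
  let φ (x : ι) : α := e (j x, ⟨ψ x, hψ (mem_range_self x)⟩)
  refine ⟨φ, fun x y hxy => hj (congrArg Prod.fst (e.injective hxy)), hjc.trans ?_,
    funext fun x => congrFun he _⟩
  let r : range t := Classical.arbitrary _
  refine mk_le_of_injective (f := fun z => ⟨e (z, r), ?_⟩) fun z w hzw => ?_
  · rintro ⟨x, hx⟩
    exact z.2 ⟨x, congrArg Prod.fst (e.injective hx)⟩
  · exact Subtype.ext (congrArg Prod.fst (e.injective (Subtype.ext_iff.1 hzw)))

end LargeFibred

theorem exists_largeFibred_range_eq [Infinite α] {R : Set β} (hR : R.Nonempty) (h : #R ≤ #α) :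
    ∃ t : α → β, LargeFibred t ∧ range t = R := by
  have := hR.to_subtype
  obtain ⟨e⟩ := Cardinal.eq.1 (mk_prod_eq_left h).symm
  refine ⟨Subtype.val ∘ Prod.snd ∘ e, ((LargeFibred.snd h).comp_equiv e).comp _, ?_⟩
  rw [range_comp, (Prod.snd_surjective.comp e.surjective).range_eq, image_univ, Subtype.range_coe]

theorem exists_largeFibred_surjective [Infinite α] [Nonempty β] (h : #β ≤ #α) :
    ∃ t : α → β, LargeFibred t ∧ Surjective t := by
  simpa only [range_eq_univ] using exists_largeFibred_range_eq univ_nonempty (mk_univ.trans_le h)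

theorem exists_largeFibred_eqOn [Infinite α] (hβ : #β ≤ #α) {Q : Set α}
    (hQ : #α ≤ #(Qᶜ : Set α)) (s : α → β) : ∃ t : α → β, LargeFibred t ∧ EqOn t s Q := by
  have : Infinite ↥Qᶜ := infinite_iff.2 ((aleph0_le_mk α).trans hQ)
  have : Nonempty β := ⟨s (Classical.arbitrary α)⟩
  obtain ⟨r, hr, hsurj⟩ := exists_largeFibred_surjective (hβ.trans hQ)
  refine ⟨extend Subtype.val r s, fun a => ?_, fun a ha => extend_apply' _ _ _ ?_⟩
  · obtain ⟨z, hz⟩ := hsurj (extend Subtype.val r s a)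
    rw [← hz]
    refine (hQ.trans (hr z)).trans ((mk_image_eq Subtype.val_injective).ge.trans ?_)
    refine mk_le_mk_of_subset ?_
    rintro _ ⟨w, hw, rfl⟩
    exact (Subtype.val_injective.extend_apply r s w).trans hw
  · rintro ⟨z, rfl⟩
    exact z.2 ha

theorem exists_bijOn_range_le_mk_compl [Infinite α] {t : α → β} {b : β}
    (hb : #α ≤ #(t ⁻¹' {b})) : ∃ T, BijOn t T (range t) ∧ #α ≤ #(Tᶜ : Set α) := by
  obtain ⟨T, -, hT⟩ := SurjOn.exists_bijOn_subset (image_univ (f := t)).superset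
  refine ⟨T, hT, ?_⟩
  have unique : (T ∩ t ⁻¹' {b}).Subsingleton := fun x hx y hy =>
    hT.injOn hx.1 hy.1 (hx.2.trans hy.2.symm)
  refine (le_mk_sdiff (aleph0_le_mk α) hb
    (unique.finite.lt_aleph0.trans_le (aleph0_le_mk α))).trans (mk_le_mk_of_subset ?_)
  exact fun x hx hxT => hx.2 ⟨hxT, hx.1⟩

end LargeFibred

section Clones

variable {X : Type u} {C : Set (Ops X)} {n : ℕ} {f : (Fin (n + 1) → X) → X}

theorem isClone_pol1 (G : Set (X → X)) : IsClone (Pol1 G) :=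
  ⟨fun _ k _ hg => hg k, fun _ _ _ hf _ hg h hh => hf _ fun i => hg i h hh⟩

theorem exists_notMem_of_not_subset_pol1 {G : Set (X → X)} (h : ¬ C ⊆ Pol1 G) :
    ∃ (n : ℕ) (f : (Fin (n + 1) → X) → X) (g : Fin (n + 1) → X → X), (⟨n, f⟩ : Ops X) ∈ C ∧
      (∀ i, g i ∈ G) ∧ (fun x => f fun i => g i x) ∉ G := by
  obtain ⟨⟨n, f⟩, hf, hfG⟩ := not_subset.1 h
  simp only [Pol1, mem_ofPred_eq, not_forall] at hfG
  obtain ⟨g, hg, hfg⟩ := hfG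
  exact ⟨n, f, g, hf, hg, hfg⟩

theorem IsClone.unaryOp_comp_mem (hC : IsClone C) (hf : (⟨n, f⟩ : Ops X) ∈ C)
    {h : X → Fin (n + 1) → X} (hh : ∀ i, unaryOp (fun x => h x i) ∈ C) : unaryOp (f ∘ h) ∈ C :=
  hC.2 n 0 f hf (fun i x => h (x 0) i) hh

theorem IsClone.unaryOp_comp_unaryOp_mem (hC : IsClone C) {f g : X → X} (hf : unaryOp f ∈ C)
    (hg : unaryOp g ∈ C) : unaryOp (f ∘ g) ∈ C :=
  hC.unaryOp_comp_mem hf (h := fun x _ => g x) fun _ => hg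

/-- A clone containing all permutations; such a clone is invariant under renaming the elements of
`X`. -/
structure IsSymmetricClone (C : Set (Ops X)) : Prop where
  isClone : IsClone C
  perm_mem (γ : Equiv.Perm X) : unaryOp γ ∈ C

/-- The ranges of the large-fibred unary operations of `C`. If `C` is a symmetric clone, this family
of sets determines which large-fibred maps belong to `C`. -/
def largeFibredRanges (C : Set (Ops X)) : Set (Set X) :=
  {R | ∃ t : X → X, unaryOp t ∈ C ∧ LargeFibred t ∧ range t = R}

namespace IsSymmetricClone

variable {R S : Set X}

theorem unaryOp_mem_of_range_mem (hC : IsSymmetricClone C) {t : X → X} (ht : LargeFibred t)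
    (hR : range t ∈ largeFibredRanges C) : unaryOp t ∈ C := by
  obtain ⟨s, hsC, hs, hrange⟩ := hR
  obtain ⟨e, rfl⟩ := hs.exists_comp_equiv_eq ht rfl hrange
  exact hC.isClone.unaryOp_comp_unaryOp_mem hsC (hC.perm_mem e)

theorem unaryOp_image_mem (hC : IsSymmetricClone C) {g : X → X} (hg : unaryOp g ∈ C)
    (hR : R ∈ largeFibredRanges C) : g '' R ∈ largeFibredRanges C := by
  obtain ⟨t, htC, ht, rfl⟩ := hR
  exact ⟨g ∘ t, hC.isClone.unaryOp_comp_unaryOp_mem hg htC, ht.comp g, range_comp g t⟩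

theorem mem_largeFibredRanges_of_mk_eq (hC : IsSymmetricClone C) (hR : R ∈ largeFibredRanges C)
    (h : #R = #S) (hc : #(Rᶜ : Set X) = #(Sᶜ : Set X)) : S ∈ largeFibredRanges C := by
  obtain ⟨γ, rfl⟩ := exists_perm_image_eq h hc
  exact hC.unaryOp_image_mem (hC.perm_mem γ) hR

variable [Infinite X]

theorem image_mem_largeFibredRanges (hC : IsSymmetricClone C) (hf : (⟨n, f⟩ : Ops X) ∈ C)
    {D : Set (Fin (n + 1) → X)} (hD : D.Nonempty) (h : ∀ i, eval i '' D ∈ largeFibredRanges C) :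
    f '' D ∈ largeFibredRanges C := by
  obtain ⟨T, hT, rfl⟩ := exists_largeFibred_range_eq hD ((mk_set_le D).trans mk_finite_fun.le)
  refine ⟨f ∘ T, hC.isClone.unaryOp_comp_mem hf fun i => ?_, hT.comp f, range_comp f T⟩
  exact hC.unaryOp_mem_of_range_mem (hT.comp (eval i)) (range_comp (eval i) T ▸ h i)

-- Adding to `D` the points `update d i m`, for `m` missing from the `i`-th projection, realizes the
-- sets `R i` as projections, at the cost of a small set only.
theorem exists_mem_largeFibredRanges_image_subset (hC : IsSymmetricClone C)
    (hf : (⟨n, f⟩ : Ops X) ∈ C) {D : Set (Fin (n + 1) → X)} (hD : D.Nonempty)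
    (h : ∀ i, ∃ R ∈ largeFibredRanges C, eval i '' D ⊆ R ∧ #(R \ eval i '' D : Set X) < #X) :
    ∃ R ∈ largeFibredRanges C, f '' D ⊆ R ∧ #(R \ f '' D : Set X) < #X := by
  obtain ⟨d, hd⟩ := hD
  choose R hR hDR hsmall using h
  let M : Set (Fin (n + 1) → X) := ⋃ i, update d i '' (R i \ eval i '' D)
  have mk_image_M : #(f '' M) < #X := mk_image_le.trans_lt <|
    mk_iUnion_lt_of_finite (aleph0_le_mk X) fun i => mk_image_le.trans_lt (hsmall i)
  refine ⟨f '' (D ∪ M), hC.image_mem_largeFibredRanges hf ⟨d, .inl hd⟩ fun i => ?_,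
    image_mono subset_union_left, (mk_le_mk_of_subset ?_).trans_lt mk_image_M⟩
  · convert hR i
    refine Subset.antisymm ?_ fun m hm => ?_
    · rintro _ ⟨v, hv | hv, rfl⟩
      · exact hDR i ⟨v, hv, rfl⟩
      · obtain ⟨j, m, hm, rfl⟩ := mem_iUnion.1 hv
        rcases eq_or_ne i j with rfl | hij
        · simpa using hm.1
        · simpa [hij] using hDR i ⟨d, hd, rfl⟩
    · by_cases hmD : m ∈ eval i '' D
      · exact image_mono subset_union_left hmD
      · exact ⟨update d i m, .inr (mem_iUnion.2 ⟨i, m, ⟨hm, hmD⟩, rfl⟩), by simp⟩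
  · rw [image_union, union_sdiff_left]
    exact sdiff_subset

end IsSymmetricClone

end Clones

section AllUnary

variable {X : Type u} {C : Set (Ops X)}

instance infinite_of_isRegular [h : Fact (#X).IsRegular] : Infinite X :=
  infinite_iff.2 h.out.aleph0_le

theorem exists_le_mk_setOf_le_mk_inter {α β σ : Type u} {κ : Cardinal.{u}} (hκ : κ.IsRegular)
    (hσ : #σ < κ) {W : Set α} {P : σ → Set α} (hWP : W ⊆ ⋃ s, P s) {h : α → β}
    (hW : κ ≤ #{y | κ ≤ #(W ∩ h ⁻¹' {y} : Set α)}) :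
    ∃ s, κ ≤ #{y | κ ≤ #(W ∩ P s ∩ h ⁻¹' {y} : Set α)} := by
  by_contra! hP
  have small := (card_iUnion_lt_iff_forall_of_isRegular hκ hσ).2 hP
  obtain ⟨y, hy, hyP⟩ := sdiff_nonempty_of_mk_lt_mk (small.trans_le hW)
  simp only [mem_iUnion, mem_ofPred_eq, not_exists, not_le] at hyP
  refine ((mk_le_mk_of_subset ?_).trans_lt
    ((card_iUnion_lt_iff_forall_of_isRegular hκ hσ).2 hyP)).not_ge hy
  rintro x ⟨hxW, hxy⟩
  obtain ⟨s, hs⟩ := mem_iUnion.1 (hWP hxW)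
  exact mem_iUnion.2 ⟨s, ⟨hxW, hs⟩, hxy⟩

section Regular

variable [Fact (#X).IsRegular]

theorem exists_subset_const_or_mk_fiber_lt {W : Set X} {g h : X → X} (hg : g ∈ monA X)
    (hW : #X ≤ #{y | #X ≤ #(W ∩ h ⁻¹' {y} : Set X)}) :
    ∃ W' ⊆ W, #X ≤ #{y | #X ≤ #(W' ∩ h ⁻¹' {y} : Set X)} ∧
      ((∃ c, ∀ x ∈ W', g x = c) ∨ ∀ y, #(W' ∩ g ⁻¹' {y} : Set X) < #X) := by
  let B : Set X := {y | ¬ #(g ⁻¹' {y}) < #X}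
  have mk_option : #(Option B) < #X := by
    rw [Cardinal.mk_option]
    exact add_lt_of_lt (aleph0_le_mk X) hg (one_lt_aleph0.trans_le (aleph0_le_mk X))
  let P : Option B → Set X := fun s => s.elim (g ⁻¹' Bᶜ) fun c => g ⁻¹' {c.1}
  have cover : W ⊆ ⋃ s, P s := fun x _ => by
    by_cases hx : g x ∈ B
    · exact mem_iUnion.2 ⟨some ⟨g x, hx⟩, rfl⟩
    · exact mem_iUnion.2 ⟨none, hx⟩
  obtain ⟨s, hs⟩ := exists_le_mk_setOf_le_mk_inter Fact.out mk_option cover hW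
  refine ⟨W ∩ P s, inter_subset_left, hs, ?_⟩
  rcases s with _ | c
  · refine .inr fun y => ?_
    by_cases hy : y ∈ B
    · have : W ∩ P none ∩ g ⁻¹' {y} = ∅ :=
        eq_empty_of_forall_notMem fun x hx => hx.1.2 (hx.2 ▸ hy)
      simpa [this] using (aleph0_pos.trans_le (aleph0_le_mk X))
    · exact (mk_le_mk_of_subset inter_subset_right).trans_lt (not_not.1 hy)
  · exact .inl ⟨c, fun x hx => hx.2⟩

theorem exists_forall_const_or_mk_fiber_lt {J : Type*} [Finite J] {g : J → X → X} {h : X → X}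
    (hg : ∀ i, g i ∈ monA X) (hh : h ∉ monA X) :
    ∃ W : Set X, #X ≤ #{y | #X ≤ #(W ∩ h ⁻¹' {y} : Set X)} ∧
      ∀ i, (∃ c, ∀ x ∈ W, g i x = c) ∨ ∀ y, #(W ∩ g i ⁻¹' {y} : Set X) < #X := by
  classical
  have := Fintype.ofFinite J
  suffices key : ∀ F : Finset J, ∃ W : Set X, #X ≤ #{y | #X ≤ #(W ∩ h ⁻¹' {y} : Set X)} ∧
      ∀ i ∈ F, (∃ c, ∀ x ∈ W, g i x = c) ∨ ∀ y, #(W ∩ g i ⁻¹' {y} : Set X) < #X by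
    simpa only [Finset.mem_univ, forall_const] using key Finset.univ
  intro F
  induction F using Finset.induction_on with
  | empty => exact ⟨univ, by simpa only [monA, mem_ofPred_eq, not_lt, univ_inter] using hh, by simp⟩
  | insert i F _ ih =>
    obtain ⟨W, hW, hF⟩ := ih
    obtain ⟨W', hW'W, hW', hi⟩ := exists_subset_const_or_mk_fiber_lt (hg i) hW
    refine ⟨W', hW', (Finset.forall_mem_insert ..).2 ⟨hi, fun j hj => (hF j hj).imp ?_ ?_⟩⟩
    · exact fun ⟨c, hc⟩ => ⟨c, fun x hx => hc x (hW'W hx)⟩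
    · exact fun hlt y => (mk_le_mk_of_subset (inter_subset_inter_left _ hW'W)).trans_lt (hlt y)

end Regular

theorem eval_image_setOf_eq_self {n : ℕ} (i : Fin n) (c : X) :
    eval i '' {v : Fin n → X | v i = c} = {c} :=
  Subset.antisymm (image_subset_iff.2 fun _ hv => hv)
    (singleton_subset_iff.2 ⟨fun _ => c, rfl, rfl⟩)

theorem eval_image_setOf_eq_of_ne {n : ℕ} {i k : Fin n} (h : k ≠ i) (c : X) :
    eval k '' {v : Fin n → X | v i = c} = Set.univ :=
  eq_univ_of_forall fun y => ⟨update (fun _ => c) k y, by simp [h.symm], by simp⟩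

theorem exists_eqOn_compl_forall_largeFibred [Infinite X] {n : ℕ} {i : Fin (n + 1)} {A : Set X}
    (hA : #X ≤ #A) (hAc : #X ≤ #(Aᶜ : Set X)) {d : X} {τ : X → Fin (n + 1) → X}
    (hτ : ∀ x, τ x i = d) (c : X) :
    ∃ h : X → Fin (n + 1) → X, (∀ x ∈ A, h x i = c) ∧ EqOn h τ Aᶜ ∧
      ∀ k, LargeFibred fun x => h x k := by
  classical
  have : Infinite A := infinite_iff.2 ((aleph0_le_mk X).trans hA)
  obtain ⟨r, hr, range_r⟩ := exists_largeFibred_range_eq (α := A)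
    (show {v : Fin (n + 1) → X | v i = c}.Nonempty from ⟨fun _ => c, rfl⟩)
    ((mk_set_le _).trans (mk_finite_fun.trans_le hA))
  let h (x : X) : Fin (n + 1) → X := if hx : x ∈ A then r ⟨x, hx⟩ else τ x
  have h_of_mem {x} (hx : x ∈ A) : h x = r ⟨x, hx⟩ := dif_pos hx
  have h_of_notMem {x} (hx : x ∉ A) : h x = τ x := dif_neg hx
  refine ⟨h, fun x hx => h_of_mem hx ▸ range_r.subset (mem_range_self _), fun x => h_of_notMem,
    fun k x => ?_⟩
  by_cases hx : x ∉ A ∧ k = i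
  · obtain ⟨hx, rfl⟩ := hx
    refine hAc.trans (mk_le_mk_of_subset fun y hy => ?_)
    simp only [mem_preimage, mem_singleton_iff, h_of_notMem hx, h_of_notMem hy, hτ]
  · obtain ⟨a, ha⟩ : ∃ a, r a k = h x k := by
      by_cases hxA : x ∈ A
      · exact ⟨⟨x, hxA⟩, by rw [h_of_mem]⟩
      · have hk : k ≠ i := fun hk => hx ⟨hxA, hk⟩
        obtain ⟨a, ha⟩ : update (fun _ => c) k (h x k) ∈ range r := by
          simp [range_r, hk.symm]
        exact ⟨a, by rw [ha, update_self]⟩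
    calc #X ≤ #(eval k ∘ r ⁻¹' {r a k}) := hA.trans (hr.comp (eval k) a)
      _ ≤ #(Subtype.val '' (eval k ∘ r ⁻¹' {r a k})) := (mk_image_eq Subtype.val_injective).ge
      _ ≤ _ := mk_le_mk_of_subset <| by
        rintro _ ⟨y, hy, rfl⟩
        exact (congrFun (h_of_mem y.2) k).trans (hy.trans ha)

namespace IsSymmetricClone

theorem exists_unaryOp_mem_mk_fiber [Fact (#X).IsRegular] (hC : IsSymmetricClone C)
    (hB : ¬ C ⊆ Pol1 (monB X)) : ∃ u c, unaryOp u ∈ C ∧ #X ≤ #(u ⁻¹' {c}) := by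
  obtain ⟨n, f, g, hf, hg, hfg⟩ := exists_notMem_of_not_subset_pol1 hB
  simp only [monB, mem_ofPred_eq, not_forall, not_lt] at hfg hg
  obtain ⟨c, hc⟩ := hfg
  obtain ⟨τ, hτc, hτ⟩ := exists_forall_mem_injective_comp_le_mk_compl Fact.out rfl fun _ : X =>
    fun S hS => exists_mem_forall_notMem_of_mk_fiber_lt Fact.out hc (g := g)
      (fun i y => (mk_le_mk_of_subset inter_subset_right).trans_lt (hg i y)) hS
  obtain ⟨j, hj, hjc⟩ := exists_injective_le_mk_compl_range (le_refl #X)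
  choose γ hγ using fun i => exists_perm_comp_eq_of_le_mk_compl hj (hτ i).1 hjc (hτ i).2
  refine ⟨f ∘ fun x i => γ i x, c, hC.isClone.unaryOp_comp_mem hf fun i => hC.perm_mem (γ i), ?_⟩
  refine mk_le_of_injective (f := fun x => ⟨j x, ?_⟩) fun x y hxy =>
    hj (Subtype.ext_iff.1 hxy)
  have hγ (i) : γ i (j x) = g i (τ x) := congrFun (hγ i) x
  simpa only [mem_preimage, comp_apply, hγ] using hτc x

theorem exists_unaryOp_mem_comp_const [Infinite X] {ι : Type u} (hC : IsSymmetricClone C)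
    {u : X → X} (hu : unaryOp u ∈ C) {c : X} (hc : #X ≤ #(u ⁻¹' {c})) {a : ι → X}
    (ha : Injective a) (hac : #X ≤ #((range a)ᶜ : Set X)) (d : X) :
    ∃ v, unaryOp v ∈ C ∧ v ∘ a = fun _ => d := by
  classical
  obtain ⟨p, hp, hpι, hpc⟩ :=
    exists_subset_mk_eq_le_mk_sdiff (aleph0_le_mk X) hc (mk_le_of_injective ha)
  obtain ⟨e⟩ := Cardinal.eq.1 hpι.symm
  have range_e : range (Subtype.val ∘ e) = p := by
    rw [e.surjective.range_comp, Subtype.range_coe]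
  obtain ⟨γ, hγ⟩ := exists_perm_comp_eq_of_le_mk_compl ha
    (Subtype.val_injective.comp e.injective) hac
    (by rw [range_e]; exact hpc.trans (mk_le_mk_of_subset fun _ hx => hx.2))
  refine ⟨Equiv.swap c d ∘ u ∘ γ, hC.isClone.unaryOp_comp_unaryOp_mem (hC.perm_mem _)
    (hC.isClone.unaryOp_comp_unaryOp_mem hu (hC.perm_mem γ)), funext fun ξ => ?_⟩
  have hu : u (e ξ) = c := hp (e ξ).2
  have hγ : γ (a ξ) = e ξ := congrFun hγ ξ
  simp only [comp_apply, hγ, hu, Equiv.swap_apply_left]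

theorem exists_unaryOp_mem_mk_setOf_mk_fiber [Fact (#X).IsRegular] (hC : IsSymmetricClone C)
    (hA : ¬ C ⊆ Pol1 (monA X)) (hB : ¬ C ⊆ Pol1 (monB X)) :
    ∃ t, unaryOp t ∈ C ∧ #X ≤ #{y | #X ≤ #(t ⁻¹' {y})} := by
  obtain ⟨u, c, hu, hc⟩ := hC.exists_unaryOp_mem_mk_fiber hB
  obtain ⟨n, f, g, hf, hg, hfg⟩ := exists_notMem_of_not_subset_pol1 hA
  obtain ⟨W, hW, hgW⟩ := exists_forall_const_or_mk_fiber_lt hg hfg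
  set Y : Set X := {y | #X ≤ #(W ∩ (fun x => f fun i => g i x) ⁻¹' {y} : Set X)}
  have : Nonempty Y := (nonempty_of_le_mk (aleph0_le_mk X) hW).to_subtype
  have hYX : #(X × Y) = #X := mk_prod_eq_left (mk_set_le Y)
  let L : Set (Fin (n + 1)) := {i | ∀ y, #(W ∩ g i ⁻¹' {y} : Set X) < #X}
  obtain ⟨τ, hτW, hτ⟩ := exists_forall_mem_injective_comp_le_mk_compl Fact.out hYX
    (g := fun i : L => g i) fun p S hS =>
      exists_mem_forall_notMem_of_mk_fiber_lt Fact.out p.2.2 (g := fun i : L => g i)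
        (fun i y => (mk_le_mk_of_subset (inter_subset_inter_left _ inter_subset_left)).trans_lt
          (i.2 y)) hS
  obtain ⟨j, hj, hjc⟩ := exists_injective_le_mk_compl_range hYX.le
  have lift (i) : ∃ v, unaryOp v ∈ C ∧ v ∘ j = g i ∘ τ := by
    rcases hgW i with ⟨d, hd⟩ | hi
    · obtain ⟨v, hv, hvj⟩ := hC.exists_unaryOp_mem_comp_const hu hc hj hjc d
      exact ⟨v, hv, hvj.trans (funext fun p => (hd _ (hτW p).1).symm)⟩
    · obtain ⟨γ, hγ⟩ := exists_perm_comp_eq_of_le_mk_compl hj (hτ ⟨i, hi⟩).1 hjc (hτ ⟨i, hi⟩).2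
      exact ⟨γ, hC.perm_mem γ, hγ⟩
  choose v hv hvj using lift
  refine ⟨f ∘ fun x i => v i x, hC.isClone.unaryOp_comp_mem hf hv,
    hW.trans (mk_le_mk_of_subset fun y hy => ?_)⟩
  refine mk_le_of_injective (f := fun x => ⟨j (x, ⟨y, hy⟩), ?_⟩) fun x x' h =>
    congrArg Prod.fst (hj (Subtype.ext_iff.1 h))
  have hvj (i) : v i (j (x, ⟨y, hy⟩)) = g i (τ (x, ⟨y, hy⟩)) := congrFun (hvj i) _
  simpa only [mem_preimage, comp_apply, hvj] using (hτW (x, ⟨y, hy⟩)).2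

-- If `t` has many large fibres, a permutation moving base points of large fibres onto a transversal
-- of `t` makes all nonempty fibres of `t ∘ γ ∘ t` large.
theorem exists_mem_largeFibredRanges_le_mk [Infinite X] (hC : IsSymmetricClone C)
    {t : X → X} (ht : unaryOp t ∈ C) (hY : #X ≤ #{y | #X ≤ #(t ⁻¹' {y})}) :
    ∃ R ∈ largeFibredRanges C, #X ≤ #R := by
  set Y : Set X := {y | #X ≤ #(t ⁻¹' {y})}
  have hY_range : Y ⊆ range t := fun y hy => nonempty_of_le_mk (aleph0_le_mk X) hy
  obtain ⟨y, hy⟩ := nonempty_of_le_mk (aleph0_le_mk X) hY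
  obtain ⟨T, hT, hTc⟩ := exists_bijOn_range_le_mk_compl hy
  have mk_T : #T = #X := mk_eq_of_le_mk <|
    hY.trans ((mk_le_mk_of_subset (hY_range.trans hT.surjOn)).trans mk_image_le)
  obtain ⟨Z, hZY, mk_Z, hZc⟩ := exists_subset_mk_eq_le_mk_sdiff (aleph0_le_mk X) hY le_rfl
  have mk_Zc : #(Zᶜ : Set X) = #X :=
    mk_eq_of_le_mk (hZc.trans (mk_le_mk_of_subset fun _ hx => hx.2))
  obtain ⟨γ, hγ⟩ := exists_perm_image_eq (mk_Z.trans mk_T.symm)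
    (mk_Zc.trans (mk_eq_of_le_mk hTc).symm)
  have lift {y} (hy : y ∈ range t) : ∃ z ∈ Y, t (γ z) = y := by
    obtain ⟨w, hw, rfl⟩ := hT.surjOn hy
    obtain ⟨z, hz, rfl⟩ := hγ.superset hw
    exact ⟨z, hZY hz, rfl⟩
  refine ⟨range (t ∘ γ ∘ t), ⟨_, hC.isClone.unaryOp_comp_unaryOp_mem ht
    (hC.isClone.unaryOp_comp_unaryOp_mem (hC.perm_mem γ) ht), fun x => ?_, rfl⟩,
    hY.trans (mk_le_mk_of_subset fun y hy => ?_)⟩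
  · obtain ⟨z, hz, hzx⟩ := lift (mem_range_self (γ (t x)))
    refine le_trans hz (mk_le_mk_of_subset fun w hw => ?_)
    exact (congrArg (t ∘ γ) (show t w = z from hw)).trans hzx
  · obtain ⟨_, hz, rfl⟩ := lift (hY_range hy)
    obtain ⟨x, rfl⟩ := hY_range hz
    exact ⟨x, rfl⟩

theorem exists_mem_largeFibredRanges_mk_compl_lt [Infinite X] (hC : IsSymmetricClone C)
    {R : Set X} (hG : ¬ C ⊆ Pol1 (monG X #(Rᶜ : Set X))) (hR : R ∈ largeFibredRanges C)
    (hRX : #X ≤ #R) :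
    ∃ S ∈ largeFibredRanges C, #X ≤ #S ∧ #(Sᶜ : Set X) < #(Rᶜ : Set X) := by
  obtain ⟨n, f, g, hf, hg, hfg⟩ := exists_notMem_of_not_subset_pol1 hG
  simp only [monG, mem_ofPred_eq, not_forall, not_le] at hfg hg
  obtain ⟨A, hA, hfA⟩ := hfg
  choose Z hZg hZ hZc using fun i =>
    exists_mk_eq_le_mk_compl (hg i A hA) (mk_set_le (Rᶜ : Set X))
  have hD : (univ.pi fun i => (Z i)ᶜ).Nonempty :=
    univ_pi_nonempty_iff.2 fun i => nonempty_of_le_mk (aleph0_le_mk X) (hZc i)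
  have hlt : #((f '' univ.pi fun i => (Z i)ᶜ)ᶜ : Set X) < #(Rᶜ : Set X) := by
    refine (mk_le_mk_of_subset (compl_subset_compl.2 ?_)).trans_lt hfA
    rintro _ ⟨x, hx, rfl⟩
    exact ⟨fun i => g i x, fun i _ hi => hZg i hi ⟨x, hx, rfl⟩, rfl⟩
  refine ⟨_, hC.image_mem_largeFibredRanges hf hD fun i => ?_, ?_, hlt⟩
  · rw [eval_image_univ_pi hD]
    exact hC.mem_largeFibredRanges_of_mk_eq hR
      ((mk_eq_of_le_mk hRX).trans (mk_eq_of_le_mk (hZc i)).symm) (by rw [compl_compl, hZ i])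
  · have := mk_compl_of_infinite _ (hlt.trans_le (mk_set_le _))
    rw [← this, compl_compl]

theorem univ_mem_largeFibredRanges [Infinite X] (hC : IsSymmetricClone C)
    (hG : ∀ l, 1 ≤ l → l ≤ #X → ¬ C ⊆ Pol1 (monG X l)) {R : Set X} (hR : R ∈ largeFibredRanges C)
    (hRX : #X ≤ #R) : Set.univ ∈ largeFibredRanges C := by
  obtain ⟨S, ⟨hS, hSX⟩, hmin⟩ := exists_minimalFor_of_wellFoundedLT
    (fun S => S ∈ largeFibredRanges C ∧ #X ≤ #S) (fun S => #(Sᶜ : Set X)) ⟨R, hR, hRX⟩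
  by_cases hSc : #(Sᶜ : Set X) = 0
  · rwa [← compl_empty_iff.1 (mk_set_eq_zero_iff.1 hSc)]
  · obtain ⟨T, hT, hTX, hlt⟩ := hC.exists_mem_largeFibredRanges_mk_compl_lt
      (hG _ (Cardinal.one_le_iff_ne_zero.2 hSc) (mk_set_le _)) hS hSX
    exact absurd (hmin ⟨hT, hTX⟩ hlt.le) hlt.not_ge

theorem exists_mem_largeFibredRanges_le_mk_compl [Infinite X] (hC : IsSymmetricClone C)
    (huniv : Set.univ ∈ largeFibredRanges C) {G : Set (X → X)} (hCG : ¬ C ⊆ Pol1 G)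
    (hE : monE X ⊆ G) (hG : ∀ g ∈ G, g ∈ monE X ∨ ∃ c, range g = {c} ∧ {c} ∈ largeFibredRanges C) :
    ∃ h ∉ G, ∃ R ∈ largeFibredRanges C, range h ⊆ R ∧ #X ≤ #(Rᶜ : Set X) := by
  obtain ⟨n, f, g, hf, hg, hfg⟩ := exists_notMem_of_not_subset_pol1 hCG
  refine ⟨_, hfg, ?_⟩
  have image_range (i) : eval i '' range (fun x i => g i x) = range (g i) := (range_comp ..).symm
  obtain ⟨R, hR, hgR, hsmall⟩ := hC.exists_mem_largeFibredRanges_image_subset hf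
    (range_nonempty fun x i => g i x) fun i => by
      rw [image_range]
      rcases hG _ (hg i) with hi | ⟨c, hgc, hc⟩
      · exact ⟨univ, huniv, subset_univ _, by rwa [← compl_eq_univ_sdiff]⟩
      · refine ⟨{c}, hc, hgc.subset, ?_⟩
        rw [hgc, sdiff_self]
        simpa using aleph0_pos.trans_le (aleph0_le_mk X)
  rw [← range_comp] at hgR hsmall
  refine ⟨R, hR, hgR, ?_⟩
  have hlarge : #X ≤ #((range fun x => f fun i => g i x)ᶜ : Set X) := not_lt.1 fun h => hfg (hE h)
  exact (le_mk_sdiff (aleph0_le_mk X) hlarge hsmall).trans <|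
    mk_le_mk_of_subset fun y hy hyR => hy.2 ⟨hyR, hy.1⟩

theorem exists_nontrivial_mem_largeFibredRanges [Infinite X] (hC : IsSymmetricClone C)
    (huniv : Set.univ ∈ largeFibredRanges C) (hE : ¬ C ⊆ Pol1 (monE X))
    (hF : ¬ C ⊆ Pol1 (monF X)) :
    ∃ R ∈ largeFibredRanges C, R.Nontrivial ∧ #X ≤ #(Rᶜ : Set X) := by
  classical
  obtain ⟨h, -, R, hR, hhR, hRc⟩ := hC.exists_mem_largeFibredRanges_le_mk_compl huniv hE
    Subset.rfl fun g hg => .inl hg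
  rcases ((range_nonempty h).mono hhR).exists_eq_singleton_or_nontrivial with ⟨c, rfl⟩ | hR'
  · have singleton_mem (d : X) : {d} ∈ largeFibredRanges C := by
      have := hC.unaryOp_image_mem (hC.perm_mem (Equiv.swap c d)) hR
      rwa [image_singleton, Equiv.swap_apply_left] at this
    obtain ⟨k, hk, S, hS, hkS, hSc⟩ := hC.exists_mem_largeFibredRanges_le_mk_compl huniv hF
      (fun _ => .inl) fun g hg => hg.imp_right fun ⟨d, hd⟩ =>
        ⟨d, by simp [funext hd], singleton_mem d⟩
    refine ⟨S, hS, not_subsingleton_iff.1 fun hsub => hk (.inr ⟨k (Classical.arbitrary X), ?_⟩),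
      hSc⟩
    exact fun x => hsub (hkS (mem_range_self x)) (hkS (mem_range_self _))
  · exact ⟨R, hR, hR', hRc⟩

theorem mem_largeFibredRanges_of_mk_le [Infinite X] (hC : IsSymmetricClone C)
    (huniv : Set.univ ∈ largeFibredRanges C) {R S : Set X} (hR : R ∈ largeFibredRanges C)
    (hRc : #X ≤ #(Rᶜ : Set X)) (hS : S.Nonempty) (hSR : #S ≤ #R) : S ∈ largeFibredRanges C := by
  have := hS.to_subtype
  obtain ⟨t, htC, ht, htuniv⟩ := huniv
  obtain ⟨ε⟩ := hSR
  obtain ⟨φ, hφ, hφc, htφ⟩ := ht.exists_lift (mk_set_le R) (ψ := Subtype.val ∘ invFun ε)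
    (htuniv ▸ subset_univ _)
  obtain ⟨γ, hγ⟩ := exists_perm_comp_eq_of_le_mk_compl Subtype.val_injective hφ
    (by rwa [Subtype.range_coe]) hφc
  convert hC.unaryOp_image_mem (hC.isClone.unaryOp_comp_unaryOp_mem htC (hC.perm_mem γ)) hR
  calc S = range (Subtype.val ∘ invFun ε) := by
        rw [(invFun_surjective ε.injective).range_comp, Subtype.range_coe]
    _ = range ((t ∘ γ) ∘ (Subtype.val : R → X)) := by rw [← htφ, ← hγ, comp_assoc]
    _ = t ∘ γ '' R := by rw [range_comp, Subtype.range_coe]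

theorem pair_mem_largeFibredRanges [Infinite X] (hC : IsSymmetricClone C)
    (huniv : Set.univ ∈ largeFibredRanges C) {R : Set X} (hR : R ∈ largeFibredRanges C)
    (hnt : R.Nontrivial) (hRc : #X ≤ #(Rᶜ : Set X)) (c d : X) : {c, d} ∈ largeFibredRanges C := by
  obtain ⟨a, ha, b, hb, hab⟩ := hnt
  refine hC.mem_largeFibredRanges_of_mk_le huniv hR hRc (insert_nonempty c {d}) ?_
  calc #({c, d} : Set X) ≤ 2 := by
        simpa [one_add_one_eq_two] using mk_insert_le (s := {d}) (a := c)
    _ = #({a, b} : Set X) := by rw [mk_insert (by simpa using hab)]; simp [one_add_one_eq_two]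
    _ ≤ #R := mk_le_mk_of_subset (insert_subset ha (singleton_subset_iff.2 hb))

variable {n : ℕ} {f : (Fin (n + 1) → X) → X} {i : Fin (n + 1)} {c d : X}

theorem exists_mem_largeFibredRanges_of_small_slice [Infinite X] (hC : IsSymmetricClone C)
    (huniv : Set.univ ∈ largeFibredRanges C) (hpair : ∀ c d, {c, d} ∈ largeFibredRanges C)
    (hf : (⟨n, f⟩ : Ops X) ∈ C) (hc : #(f '' {v | v i = c}) < #X)
    (hd : #X ≤ #(f '' {v | v i = d})) :
    ∃ R ∈ largeFibredRanges C, #X ≤ #R ∧ #X ≤ #(Rᶜ : Set X) := by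
  obtain ⟨p, hp, mk_p, hpc⟩ := exists_subset_mk_eq_le_mk_sdiff (aleph0_le_mk X) hd le_rfl
  have image_p : f '' {v | v i = d ∧ f v ∈ p} = p := by
    refine Subset.antisymm (image_subset_iff.2 fun v hv => hv.2) fun y hy => ?_
    obtain ⟨v, hv, rfl⟩ := hp hy
    exact ⟨v, ⟨hv, hy⟩, rfl⟩
  obtain ⟨w, hw⟩ := image_nonempty.1
    (image_p.symm ▸ nonempty_of_le_mk (aleph0_le_mk X) mk_p.ge)
  have hD : ({v | v i = d ∧ f v ∈ p} ∪ {v | v i = c}).Nonempty := ⟨fun _ => c, .inr rfl⟩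
  refine ⟨_, hC.image_mem_largeFibredRanges hf hD fun k => ?_, ?_, ?_⟩
  · rw [image_union]
    rcases eq_or_ne k i with rfl | hk
    · rw [eval_image_setOf_eq_self]
      convert hpair d c using 1
      refine congrArg (· ∪ {c}) (Subset.antisymm ?_ ?_)
      · rintro _ ⟨v, hv, rfl⟩
        exact hv.1
      · exact singleton_subset_iff.2 ⟨w, hw, hw.1⟩
    · rwa [eval_image_setOf_eq_of_ne hk, union_univ]
  · rw [image_union, image_p]
    exact mk_p.ge.trans (mk_le_mk_of_subset subset_union_left)
  · rw [image_union, image_p]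
    refine (le_mk_sdiff (aleph0_le_mk X) hpc hc).trans (mk_le_mk_of_subset ?_)
    exact fun y hy => not_or.2 ⟨hy.1.2, hy.2⟩

theorem exists_mem_largeFibredRanges_of_large_slices [Infinite X] (hC : IsSymmetricClone C)
    (huniv : Set.univ ∈ largeFibredRanges C) (hpair : ∀ c d, {c, d} ∈ largeFibredRanges C)
    (hf : (⟨n, f⟩ : Ops X) ∈ C) (h : ∀ i c, #X ≤ #(f '' {v | v i = c})) :
    ∃ R ∈ largeFibredRanges C, #X ≤ #R ∧ #X ≤ #(Rᶜ : Set X) := by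
  by_cases hcompl : ∃ i c, #X ≤ #((f '' {v | v i = c})ᶜ : Set X)
  · obtain ⟨i, c, hic⟩ := hcompl
    have hD : {v : Fin (n + 1) → X | v i = c}.Nonempty := ⟨fun _ => c, rfl⟩
    refine ⟨_, hC.image_mem_largeFibredRanges hf hD fun k => ?_, h i c, hic⟩
    rcases eq_or_ne k i with rfl | hk
    · rw [eval_image_setOf_eq_self]
      simpa only [pair_eq_singleton] using hpair c c
    · rwa [eval_image_setOf_eq_of_ne hk]
  · push Not at hcompl
    obtain ⟨p, -, mk_p, hpc⟩ := exists_subset_mk_eq_le_mk_sdiff (aleph0_le_mk X)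
      (mk_univ (α := X)).ge le_rfl
    rw [← compl_eq_univ_sdiff] at hpc
    have slice_sdiff (i c) : #X ≤ #(pᶜ \ (f '' {v | v i = c})ᶜ : Set X) :=
      le_mk_sdiff (aleph0_le_mk X) hpc (hcompl i c)
    have exists_mem_slice (i c) : ∃ v, v i = c ∧ f v ∉ p := by
      obtain ⟨y, hy, hyc⟩ := nonempty_of_le_mk (aleph0_le_mk X) (slice_sdiff i c)
      obtain ⟨v, hv, rfl⟩ := not_not.1 hyc
      exact ⟨v, hv, hy⟩
    let x : X := Classical.arbitrary X
    have hD : {v | f v ∉ p}.Nonempty := (exists_mem_slice 0 x).imp fun v hv => hv.2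
    refine ⟨_, hC.image_mem_largeFibredRanges hf hD fun k => ?_,
      (slice_sdiff 0 x).trans (mk_le_mk_of_subset ?_), mk_p.ge.trans (mk_le_mk_of_subset ?_)⟩
    · convert huniv
      exact eq_univ_of_forall fun c => (exists_mem_slice k c).imp fun v hv => hv.symm
    · rintro y ⟨hy, hyc⟩
      obtain ⟨v, -, rfl⟩ := not_not.1 hyc
      exact ⟨v, hy, rfl⟩
    · rintro y hy ⟨v, hv, rfl⟩
      exact hv hy

theorem exists_mem_largeFibredRanges_le_mk_and_le_mk_compl [Infinite X] (hC : IsSymmetricClone C)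
    (huniv : Set.univ ∈ largeFibredRanges C) (hpair : ∀ c d, {c, d} ∈ largeFibredRanges C)
    (hf : (⟨n, f⟩ : Ops X) ∈ C) (h : ∀ i, ∃ c, #X ≤ #(f '' {v | v i = c})) :
    ∃ R ∈ largeFibredRanges C, #X ≤ #R ∧ #X ≤ #(Rᶜ : Set X) := by
  by_cases hsmall : ∃ i c, #(f '' {v | v i = c}) < #X
  · obtain ⟨i, c, hc⟩ := hsmall
    obtain ⟨d, hd⟩ := h i
    exact hC.exists_mem_largeFibredRanges_of_small_slice huniv hpair hf hc hd
  · push Not at hsmall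
    exact hC.exists_mem_largeFibredRanges_of_large_slices huniv hpair hf hsmall

-- On a large part `A` of the fibre of `b` the inner maps run through the small slice, which the
-- outer map collapses to `b`; off `A` they run injectively through the large slice.
theorem unaryOp_mem_of_le_mk_fiber [Fact (#X).IsRegular] (hC : IsSymmetricClone C)
    (hLF : ∀ t : X → X, LargeFibred t → unaryOp t ∈ C) (hf : (⟨n, f⟩ : Ops X) ∈ C)
    (hc : #(f '' {v | v i = c}) < #X) (hd : #X ≤ #(f '' {v | v i = d})) {g : X → X} {b : X}
    (hg : #X ≤ #(g ⁻¹' {b})) : unaryOp g ∈ C := by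
  classical
  set M := f '' {v | v i = c}
  obtain ⟨A, hA, mk_A, hAc⟩ := exists_subset_mk_eq_le_mk_sdiff (aleph0_le_mk X) hg le_rfl
  have hAc : #X ≤ #(Aᶜ : Set X) := hAc.trans (mk_le_mk_of_subset fun x hx => hx.2)
  obtain ⟨τ, hτ, hfτ, hfτc⟩ := exists_forall_mem_injective_comp_of_le_mk_image Fact.out rfl
    (T := fun _ : X => {v | v i = d ∧ f v ∉ M}) (g := f) fun _ =>
      (le_mk_sdiff (aleph0_le_mk X) hd hc).trans <| mk_le_mk_of_subset <| by
        rintro _ ⟨⟨v, hv, rfl⟩, hvM⟩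
        exact ⟨v, ⟨hv, hvM⟩, rfl⟩
  obtain ⟨h, hhA, hhAc, hh⟩ :=
    exists_eqOn_compl_forall_largeFibred mk_A.ge hAc (fun x => (hτ x).1) c
  obtain ⟨t, ht, htQ⟩ := exists_largeFibred_eqOn le_rfl (Q := range (f ∘ τ) ∪ M)
    (by rw [compl_union]; exact le_mk_sdiff (aleph0_le_mk X) hfτc hc)
    fun y => if y ∈ M then b else g (invFun (f ∘ τ) y)
  convert hC.isClone.unaryOp_comp_unaryOp_mem (hLF t ht)
    (hC.isClone.unaryOp_comp_mem hf fun k => hLF _ (hh k)) using 2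
  funext x
  by_cases hx : x ∈ A
  · have hM : f (h x) ∈ M := ⟨h x, hhA x hx, rfl⟩
    exact (hA hx).trans ((htQ (.inr hM)).trans (if_pos hM)).symm
  · have hP : f (h x) = f (τ x) := congrArg f (hhAc hx)
    have hM : f (h x) ∉ M := hP ▸ (hτ x).2
    exact ((htQ (.inl ⟨x, hP.symm⟩)).trans ((if_neg hM).trans
      (congrArg g (hP ▸ leftInverse_invFun hfτ x)))).symm

theorem exists_unaryOp_mem_injective_of_le_mk_image [Fact (#X).IsRegular]
    (hC : IsSymmetricClone C) (hf : (⟨n, f⟩ : Ops X) ∈ C) {ι : Type u} (hι : #ι = #X)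
    {T : ι → Set (Fin (n + 1) → X)} (hT : ∀ ξ, #X ≤ #(f '' T ξ))
    (h : ∀ (e : X ≃ ι) (τ : ι → Fin (n + 1) → X), (∀ ξ, τ ξ ∈ T ξ) →
      ∀ k, unaryOp (fun x => τ (e x) k) ∈ C) :
    ∃ j, unaryOp j ∈ C ∧ Injective j ∧ #X ≤ #((range j)ᶜ : Set X) := by
  obtain ⟨τ, hτ, hfτ, hfτc⟩ := exists_forall_mem_injective_comp_of_le_mk_image Fact.out hι hT
  obtain ⟨e⟩ := Cardinal.eq.1 hι.symm
  refine ⟨f ∘ τ ∘ e, hC.isClone.unaryOp_comp_mem hf (h e τ hτ), hfτ.comp e.injective, ?_⟩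
  rwa [← comp_assoc, e.surjective.range_comp]

theorem exists_unaryOp_mem_injective [Fact (#X).IsRegular] (hC : IsSymmetricClone C)
    (hLF : ∀ t : X → X, LargeFibred t → unaryOp t ∈ C) (hf : (⟨n, f⟩ : Ops X) ∈ C)
    (h : ∀ i, ∃ c, #X ≤ #(f '' {v | v i = c})) :
    ∃ j, unaryOp j ∈ C ∧ Injective j ∧ #X ≤ #((range j)ᶜ : Set X) := by
  by_cases hsmall : ∃ i c, #(f '' {v | v i = c}) < #X
  · obtain ⟨i, c, hc⟩ := hsmall
    obtain ⟨d, hd⟩ := h i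
    choose b hb using h
    refine hC.exists_unaryOp_mem_injective_of_le_mk_image hf (mk_finite_prod (J := Fin (n + 1)))
      (T := fun p => {v | v p.1 = b p.1}) (fun p => hb p.1) fun e τ hτ k => ?_
    refine hC.unaryOp_mem_of_le_mk_fiber hLF hf hc hd (b := b k) ?_
    refine mk_le_of_injective (f := fun y => ⟨e.symm (k, y), ?_⟩) fun y z hyz => ?_
    · rw [mem_preimage, mem_singleton_iff, Equiv.apply_symm_apply]
      exact hτ (k, y)
    · exact congrArg Prod.snd (e.symm.injective (Subtype.ext_iff.1 hyz))
  · push Not at hsmall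
    refine hC.exists_unaryOp_mem_injective_of_le_mk_image hf
      (mk_finite_prod.trans (mk_prod_eq_left le_rfl))
      (T := fun p : Fin (n + 1) × X × X => {v | v p.1 = p.2.1}) (fun p => hsmall _ _)
      fun e τ hτ k => hLF _ fun x => ?_
    refine mk_le_of_injective (f := fun y => ⟨e.symm (k, τ (e x) k, y), ?_⟩) fun y z hyz => ?_
    · rw [mem_preimage, mem_singleton_iff, Equiv.apply_symm_apply]
      exact hτ (k, τ (e x) k, y)
    · exact congrArg (fun p => p.2.2) (e.symm.injective (Subtype.ext_iff.1 hyz))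

theorem unaryOp_mem_of_injective [Infinite X] (hC : IsSymmetricClone C)
    (hLF : ∀ t : X → X, LargeFibred t → unaryOp t ∈ C) {j : X → X} (hj : unaryOp j ∈ C)
    (hinj : Injective j) (hjc : #X ≤ #((range j)ᶜ : Set X)) (g : X → X) : unaryOp g ∈ C := by
  obtain ⟨t, ht, hsurj⟩ := exists_largeFibred_surjective (le_refl #X)
  obtain ⟨φ, hφ, hφc, rfl⟩ := ht.exists_lift le_rfl (hsurj.range_eq ▸ subset_univ (range g))
  obtain ⟨γ, rfl⟩ := exists_perm_comp_eq_of_le_mk_compl hinj hφ hjc hφc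
  exact hC.isClone.unaryOp_comp_unaryOp_mem (hLF t ht)
    (hC.isClone.unaryOp_comp_unaryOp_mem (hC.perm_mem γ) hj)

end IsSymmetricClone

/-- The almost unary operations: those which, for some coordinate `i`, take fewer than `|X|` values
on each of the slices `v i = c`. -/
def almostUnary (X : Type u) : Set (Ops X) :=
  {f | ∃ i, ∀ c, #(f.2 '' {v | v i = c}) < #X}

/-- The monoids `A`, `B`, `E`, `F` and `G_λ` of the classification. -/
def criticalMonoids (X : Type u) : Set (Set (X → X)) :=
  {G | G = monA X ∨ G = monB X ∨ G = monE X ∨ G = monF X ∨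
    ∃ lam : Cardinal.{u}, 1 ≤ lam ∧ lam ≤ #X ∧ G = monG X lam}

theorem IsSymmetricClone.unaryOp_mem [Fact (#X).IsRegular] (hC : IsSymmetricClone C)
    (hAU : ¬ C ⊆ almostUnary X) (h : ∀ G ∈ criticalMonoids X, ¬ C ⊆ Pol1 G) (g : X → X) :
    unaryOp g ∈ C := by
  obtain ⟨⟨n, f⟩, hf, hfAU⟩ := not_subset.1 hAU
  simp only [almostUnary, mem_ofPred_eq, not_exists, not_forall, not_lt] at hfAU
  have hE : ¬ C ⊆ Pol1 (monE X) := h _ (.inr (.inr (.inl rfl)))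
  have hF : ¬ C ⊆ Pol1 (monF X) := h _ (.inr (.inr (.inr (.inl rfl))))
  have hG (l) (hl : 1 ≤ l) (hlX : l ≤ #X) : ¬ C ⊆ Pol1 (monG X l) :=
    h _ (.inr (.inr (.inr (.inr ⟨l, hl, hlX, rfl⟩))))
  obtain ⟨t, ht, hY⟩ :=
    hC.exists_unaryOp_mem_mk_setOf_mk_fiber (h _ (.inl rfl)) (h _ (.inr (.inl rfl)))
  obtain ⟨R₁, hR₁, hR₁X⟩ := hC.exists_mem_largeFibredRanges_le_mk ht hY
  have huniv := hC.univ_mem_largeFibredRanges hG hR₁ hR₁X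
  obtain ⟨R₂, hR₂, hnt, hR₂c⟩ := hC.exists_nontrivial_mem_largeFibredRanges huniv hE hF
  obtain ⟨R, hR, hRX, hRc⟩ := hC.exists_mem_largeFibredRanges_le_mk_and_le_mk_compl huniv
    (hC.pair_mem_largeFibredRanges huniv hR₂ hnt hR₂c) hf hfAU
  have hLF (t : X → X) (ht : LargeFibred t) : unaryOp t ∈ C :=
    hC.unaryOp_mem_of_range_mem ht <|
      hC.mem_largeFibredRanges_of_mk_le huniv hR hRc (range_nonempty t) ((mk_set_le _).trans hRX)
  obtain ⟨j, hj, hinj, hjc⟩ := hC.exists_unaryOp_mem_injective hLF hf hfAU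
  exact hC.unaryOp_mem_of_injective hLF hj hinj hjc g

end AllUnary

section Precompleteness

variable {X : Type u} {C F : Set (Ops X)} {G : Set (X → X)} {p : X → X → X}

theorem subset_cloneGen (F : Set (Ops X)) : F ⊆ cloneGen F := fun _ hf _ hC => hC.2 hf

theorem isClone_cloneGen (F : Set (Ops X)) : IsClone (cloneGen F) :=
  ⟨fun n k _ hC => hC.1.1 n k, fun n m f hf g hg _ hC =>
    hC.1.2 n m f (hf _ hC) g fun i => hg i _ hC⟩

theorem cloneGen_subset (hC : IsClone C) (h : F ⊆ C) : cloneGen F ⊆ C := fun _ hf => hf C ⟨hC, h⟩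

/-- A binary function, viewed as a binary operation in `Ops`. -/
def binaryOp (p : X → X → X) : Ops X := ⟨1, fun v => p (v 0) (v 1)⟩

/-- `p` is injective on `S × S` for some `S ⊆ X` with `|S| = |X|`; the set `S` is encoded by a map
`w` with range `S`, whose injectivity is implied. Together with the unary operations, any such `p`
generates all operations. -/
def InjectiveOnLargeSquare (p : X → X → X) : Prop :=
  ∃ w : X → X, Injective fun q : X × X => p (w q.1) (w q.2)

theorem InjectiveOnLargeSquare.binaryOp_notMem_almostUnary [Nonempty X]
    (hp : InjectiveOnLargeSquare p) : binaryOp p ∉ almostUnary X := by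
  obtain ⟨w, hw⟩ := hp
  rintro ⟨i, hi⟩
  let c := Classical.arbitrary X
  have hslice (u : X → Fin 2 → X) (hu : ∀ x, u x i = w c)
      (hinj : Injective fun x => p (u x 0) (u x 1)) : False :=
    (hi (w c)).not_ge <| (mk_range_eq _ hinj).ge.trans <| mk_le_mk_of_subset <|
      range_subset_iff.2 fun x => ⟨u x, hu x, rfl⟩
  fin_cases i
  · exact hslice (fun x => ![w c, w x]) (fun _ => rfl) fun a b hab =>
      congrArg Prod.snd (hw (a₁ := (c, a)) (a₂ := (c, b)) hab)
  · exact hslice (fun x => ![w x, w c]) (fun _ => rfl) fun a b hab =>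
      congrArg Prod.fst (hw (a₁ := (a, c)) (a₂ := (b, c)) hab)

theorem exists_injective_binary_le_mk_compl_range [Infinite X] :
    ∃ q : X → X → X, Injective (fun v : X × X => q v.1 v.2) ∧
      #X ≤ #((range fun v : X × X => q v.1 v.2)ᶜ : Set X) := by
  obtain ⟨j, hj, hjc⟩ :=
    exists_injective_le_mk_compl_range (α := X) (mk_prod_eq_left (β := X) le_rfl).le
  exact ⟨fun x y => j (x, y), hj, hjc⟩

theorem IsClone.exists_injective_mem (hC : IsClone C) (hU : ∀ g : X → X, unaryOp g ∈ C)
    (hp : binaryOp p ∈ C) (hp' : InjectiveOnLargeSquare p) (n : ℕ) :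
    ∃ a : (Fin (n + 1) → X) → X, (⟨n, a⟩ : Ops X) ∈ C ∧ Injective a := by
  obtain ⟨w, hw⟩ := hp'
  have comp_w_mem {a : (Fin (n + 1) → X) → X} (ha : (⟨n, a⟩ : Ops X) ∈ C) :
      (⟨n, w ∘ a⟩ : Ops X) ∈ C := hC.2 0 n _ (hU w) (fun _ => a) fun _ => ha
  have separates (l : List (Fin (n + 1))) : ∃ a : (Fin (n + 1) → X) → X,
      (⟨n, a⟩ : Ops X) ∈ C ∧ ∀ v v', a v = a v' → ∀ k ∈ l, v k = v' k := by
    induction l with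
    | nil => exact ⟨eval 0, hC.1 n 0, by simp⟩
    | cons k l ih =>
      obtain ⟨a, ha, hal⟩ := ih
      refine ⟨fun v => p (w (v k)) (w (a v)), hC.2 1 n _ hp ![w ∘ eval k, w ∘ a] ?_,
        fun v v' h => ?_⟩
      · exact Fin.forall_fin_two.2 ⟨comp_w_mem (hC.1 n k), comp_w_mem ha⟩
      · have hpair : (v k, a v) = (v' k, a v') := hw h
        rw [Prod.mk.injEq] at hpair
        exact List.forall_mem_cons.2 ⟨hpair.1, hal v v' hpair.2⟩
  obtain ⟨a, ha, hinj⟩ := separates (List.finRange _)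
  exact ⟨a, ha, fun v v' h => funext fun k => hinj v v' h k (List.mem_finRange k)⟩

theorem IsClone.eq_univ_of_injectiveOnLargeSquare [Nonempty X] (hC : IsClone C)
    (hU : ∀ g : X → X, unaryOp g ∈ C) (hp : binaryOp p ∈ C) (hp' : InjectiveOnLargeSquare p) :
    C = Set.univ := by
  refine eq_univ_of_forall fun ⟨n, f⟩ => ?_
  obtain ⟨a, ha, hinj⟩ := hC.exists_injective_mem hU hp hp' n
  obtain ⟨g, hg⟩ := (factorsThrough_iff f).1 (hinj.factorsThrough f)
  have := hC.2 0 n _ (hU g) (fun _ => a) fun _ => ha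
  exact hg ▸ this

theorem isClone_almostUnary [Fact (#X).IsRegular] : IsClone (almostUnary X) := by
  refine ⟨fun n k => ⟨k, fun c => ?_⟩, fun n m f ⟨i, hi⟩ _ hg => ?_⟩
  · exact ((finite_singleton c).subset (image_subset_iff.2 fun _ => id)).lt_aleph0.trans_le
      (aleph0_le_mk X)
  · obtain ⟨j, hj⟩ := hg i
    refine ⟨j, fun c => (mk_le_mk_of_subset ?_).trans_lt <|
      (card_biUnion_lt_iff_forall_of_isRegular Fact.out (hj c)
        (t := fun z _ => f '' {v | v i = z})).2 fun z _ => hi z⟩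
    rintro _ ⟨v, hv, rfl⟩
    exact mem_biUnion ⟨v, hv, rfl⟩ ⟨_, rfl, rfl⟩

theorem unaryOp_mem_almostUnary [Infinite X] (g : X → X) : unaryOp g ∈ almostUnary X :=
  ⟨0, fun c => ((finite_singleton (g c)).subset <| image_subset_iff.2 fun _ => congrArg g
    ).lt_aleph0.trans_le (aleph0_le_mk X)⟩

/-- The properties of a monoid `G` of unary functions from which, together with the pairwise
incomparability of the clones `Pol1 G`, precompleteness of `Pol1 G` will follow. -/
structure IsAdmissibleMonoid (G : Set (X → X)) : Prop where
  perm_mem (γ : Equiv.Perm X) : ⇑γ ∈ G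
  comp_mem {f g : X → X} : f ∈ G → g ∈ G → f ∘ g ∈ G
  ne_univ : G ≠ Set.univ
  exists_binaryOp_mem : ∃ p : X → X → X, InjectiveOnLargeSquare p ∧ binaryOp p ∈ Pol1 G

theorem binaryOp_mem_pol1 :
    binaryOp p ∈ Pol1 G ↔ ∀ g₁ ∈ G, ∀ g₂ ∈ G, (fun x => p (g₁ x) (g₂ x)) ∈ G :=
  ⟨fun h g₁ h₁ g₂ h₂ => h ![g₁, g₂] (Fin.forall_fin_two.2 ⟨h₁, h₂⟩),
    fun h _ hg => h _ (hg 0) _ (hg 1)⟩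

namespace IsAdmissibleMonoid

theorem unaryOp_mem_pol1 (hG : IsAdmissibleMonoid G) {h : X → X} : unaryOp h ∈ Pol1 G ↔ h ∈ G :=
  ⟨fun hh => hh (fun _ => id) fun _ => hG.perm_mem (Equiv.refl X),
    fun hh _ hg => hG.comp_mem hh (hg 0)⟩

theorem exists_unaryOp_notMem_pol1 (hG : IsAdmissibleMonoid G) :
    ∃ g : X → X, unaryOp g ∉ Pol1 G := by
  simpa only [hG.unaryOp_mem_pol1] using (ne_univ_iff_exists_notMem G).1 hG.ne_univ

end IsAdmissibleMonoid

theorem IsPrecompleteClone.eq_of_subset {D : Set (Ops X)} (hC : IsPrecompleteClone C)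
    (hD : IsClone D) (hD' : D ≠ Set.univ) (h : C ⊆ D) : C = D := by
  refine h.antisymm fun f hf => by_contra fun hfC => hD' <| univ_subset_iff.1 ?_
  rw [← hC.2.2 f hfC]
  exact cloneGen_subset hD (insert_subset hf h)

variable [Fact (#X).IsRegular]

theorem IsPrecompleteClone.exists_eq_pol1 (hC : IsPrecompleteClone C)
    (hperm : ∀ γ : Equiv.Perm X, unaryOp γ ∈ C) (hU : ¬ ∀ g : X → X, unaryOp g ∈ C)
    (hadm : ∀ G ∈ criticalMonoids X, IsAdmissibleMonoid G) :
    ∃ G ∈ criticalMonoids X, C = Pol1 G := by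
  have hAU : ¬ C ⊆ almostUnary X := by
    obtain ⟨q, hq, -⟩ := exists_injective_binary_le_mk_compl_range (X := X)
    have hne : almostUnary X ≠ Set.univ :=
      (ne_univ_iff_exists_notMem _).2
        ⟨_, InjectiveOnLargeSquare.binaryOp_notMem_almostUnary ⟨id, hq⟩⟩
    intro h
    exact hU fun g => hC.eq_of_subset isClone_almostUnary hne h ▸ unaryOp_mem_almostUnary g
  by_contra! hne
  refine hU (IsSymmetricClone.unaryOp_mem ⟨hC.1, hperm⟩ hAU fun G hG hsub => hne G hG ?_)
  refine hC.eq_of_subset (isClone_pol1 G) (fun huniv => ?_) hsub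
  obtain ⟨g, hg⟩ := (hadm G hG).exists_unaryOp_notMem_pol1
  exact hg (huniv ▸ mem_univ _)

theorem IsAdmissibleMonoid.isPrecompleteClone_pol1 (hG : IsAdmissibleMonoid G)
    (hsep : ∀ G' ∈ criticalMonoids X, Pol1 G ⊆ Pol1 G' → G = G') : IsPrecompleteClone (Pol1 G) := by
  obtain ⟨g, hg⟩ := hG.exists_unaryOp_notMem_pol1
  refine ⟨isClone_pol1 G, fun huniv => hg (huniv ▸ mem_univ _), fun f hf => ?_⟩
  obtain ⟨p, hp, hpG⟩ := hG.exists_binaryOp_mem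
  have hsub := subset_cloneGen (insert f (Pol1 G))
  have hsubG : Pol1 G ⊆ cloneGen (insert f (Pol1 G)) := (subset_insert _ _).trans hsub
  have hsymm : IsSymmetricClone (cloneGen (insert f (Pol1 G))) :=
    ⟨isClone_cloneGen _, fun γ => hsubG (hG.unaryOp_mem_pol1.2 (hG.perm_mem γ))⟩
  refine hsymm.isClone.eq_univ_of_injectiveOnLargeSquare (hsymm.unaryOp_mem ?_ ?_) (hsubG hpG) hp
  · exact fun h => hp.binaryOp_notMem_almostUnary (h (hsubG hpG))
  · intro G' hG' h
    obtain rfl := hsep G' hG' (hsubG.trans h)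
    exact hf (h (hsub (mem_insert f _)))

end Precompleteness

section Monoids

variable {X : Type u} {f g : X → X} {l : Cardinal.{u}}

theorem mem_monA : f ∈ monA X ↔ #{y | #X ≤ #(f ⁻¹' {y})} < #X := by
  simp only [monA, mem_ofPred_eq, not_lt]

theorem mk_fiber_lt_of_injective [Infinite X] (hf : Injective f) (y : X) : #(f ⁻¹' {y}) < #X :=
  ((finite_singleton y).preimage hf.injOn).lt_aleph0.trans_le (aleph0_le_mk X)

theorem monB_subset_monA [Infinite X] : monB X ⊆ monA X := fun f hf => by
  have : {y | ¬ #(f ⁻¹' {y}) < #X} = ∅ := eq_empty_of_forall_notMem fun y hy => hy (hf y)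
  rw [monA, mem_ofPred_eq, this, mk_eq_zero]
  exact aleph0_pos.trans_le (aleph0_le_mk X)

theorem mem_monA_of_mk_range_lt [Infinite X] (h : #(range f) < #X) : f ∈ monA X :=
  mem_monA.2 <| (mk_le_mk_of_subset fun _ hy => nonempty_of_le_mk (aleph0_le_mk X) hy).trans_lt h

theorem const_mem_monA [Infinite X] (c : X) : (fun _ => c) ∈ monA X :=
  mem_monA_of_mk_range_lt <| (finite_range_const (c := c)).lt_aleph0.trans_le (aleph0_le_mk X)

theorem const_notMem_monB (c : X) : (fun _ => c) ∉ monB X := fun h =>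
  (h c).not_ge <| mk_univ.ge.trans <| mk_le_mk_of_subset fun _ _ => rfl

theorem LargeFibred.notMem_monA (hf : LargeFibred f) (h : #X ≤ #(range f)) : f ∉ monA X :=
  fun hA => (h.trans (mk_le_mk_of_subset (range_subset_iff.2 fun a => hf a))).not_gt (mem_monA.1 hA)

theorem mem_monE_of_surjective [Nonempty X] (hf : Surjective f) : f ∈ monE X := by
  rw [monE, mem_ofPred_eq, hf.range_eq, compl_univ, mk_eq_zero]
  exact Cardinal.mk_ne_zero X |>.bot_lt

theorem mem_monE_of_eq_on_preimage [Infinite X] {h s : X → X} {U : Set X}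
    (hs : #((s '' U)ᶜ : Set X) < #X) (hg : g ∈ monE X) (h_eq : ∀ z, g z ∈ U → h z = s (g z)) :
    h ∈ monE X := by
  refine (mk_le_mk_of_subset fun y hy => ?_).trans_lt <|
    mk_union_lt (aleph0_le_mk X) hs (mk_image_le.trans_lt hg : #(s '' (range g)ᶜ) < #X)
  by_contra hcon
  rw [mem_union, not_or, notMem_compl_iff] at hcon
  obtain ⟨⟨x, hx, rfl⟩, hxg⟩ := hcon
  refine hxg ⟨x, ?_, rfl⟩
  rintro ⟨z, rfl⟩
  exact hy ⟨z, h_eq z hx⟩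

theorem notMem_monE (h : #X ≤ #((range f)ᶜ : Set X)) : f ∉ monE X := h.not_gt

theorem const_notMem_monE [Infinite X] (c : X) : (fun _ => c) ∉ monE X :=
  notMem_monE (mk_compl_of_infinite _ <|
    (finite_range_const (c := c)).lt_aleph0.trans_le (aleph0_le_mk X)).ge

theorem notMem_monF (h : #X ≤ #((range f)ᶜ : Set X)) (hf : (range f).Nontrivial) : f ∉ monF X := by
  rintro (hE | ⟨c, hc⟩)
  · exact notMem_monE h hE
  · exact hf.not_subset_singleton (range_subset_iff.2 hc)

theorem mem_monG_of_le_mk_compl_range (h : l ≤ #((range f)ᶜ : Set X)) : f ∈ monG X l := fun _ _ =>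
  h.trans (mk_le_mk_of_subset (compl_subset_compl.2 (image_subset_range _ _)))

theorem notMem_monG (hl : l ≤ #X) {S : Set X} (hS : #X ≤ #(Sᶜ : Set X))
    (hf : #((f '' S)ᶜ : Set X) < l) : f ∉ monG X l := fun h => by
  obtain ⟨A, hA, hAl⟩ := le_mk_iff_exists_subset.1 (hl.trans hS)
  exact (h A hAl).not_gt <| (mk_le_mk_of_subset <|
    compl_subset_compl.2 <| image_mono <| subset_compl_comm.1 hA).trans_lt hf

theorem LargeFibred.notMem_monG [Infinite X] (hf : LargeFibred f) (hl : l ≤ #X)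
    (h : #((range f)ᶜ : Set X) < l) : f ∉ monG X l := by
  obtain ⟨φ, -, hφ, hfφ⟩ := hf.exists_lift (mk_set_le (range f)) Subtype.range_coe.subset
  refine _root_.notMem_monG hl hφ ?_
  rwa [← range_comp, hfφ, Subtype.range_coe]

section Witnesses

variable [Infinite X]

theorem exists_mem_monA_notMem_monF : ∃ f, f ∈ monA X ∧ f ∉ monF X := by
  obtain ⟨a, b, hab⟩ := exists_pair_ne X
  obtain ⟨f, -, hf⟩ := exists_largeFibred_range_eq (insert_nonempty a {b}) (mk_set_le _)
  have small : #(range f) < #X := hf ▸ (toFinite {a, b}).lt_aleph0.trans_le (aleph0_le_mk X)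
  exact ⟨f, mem_monA_of_mk_range_lt small,
    notMem_monF (mk_compl_of_infinite _ small).ge (hf ▸ nontrivial_pair hab)⟩

theorem exists_mem_monB_notMem_monE_notMem_monF : ∃ f, f ∈ monB X ∧ f ∉ monE X ∧ f ∉ monF X := by
  obtain ⟨j, hj, hjc⟩ := exists_injective_le_mk_compl_range (α := X) (le_refl #X)
  exact ⟨j, mk_fiber_lt_of_injective hj, notMem_monE hjc,
    notMem_monF hjc (image_univ ▸ nontrivial_univ.image hj)⟩

theorem exists_mem_monB_forall_notMem_monG :
    ∃ f, f ∈ monB X ∧ ∀ l, 1 ≤ l → l ≤ #X → f ∉ monG X l := by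
  obtain ⟨e⟩ := Cardinal.eq.1 (mk_finite_prod (J := Bool) (α := X)).symm
  have e_symm_inj (b : Bool) : Injective fun x => e.symm (b, x) :=
    e.symm.injective.comp (Prod.mk_right_injective b)
  refine ⟨Prod.snd ∘ e, fun y => ?_, fun l hl hlX => ?_⟩
  · have : (Prod.snd ∘ e) ⁻¹' {y} ⊆ e ⁻¹' (Set.univ ×ˢ {y}) := fun x hx => ⟨trivial, hx⟩
    exact ((finite_univ.prod (finite_singleton y)).preimage e.injective.injOn |>.subset this
      ).lt_aleph0.trans_le (aleph0_le_mk X)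
  · refine notMem_monG hlX (S := range fun x => e.symm (true, x)) ?_ ?_
    · refine (mk_range_eq _ (e_symm_inj false)).ge.trans (mk_le_mk_of_subset ?_)
      rintro _ ⟨x, rfl⟩ ⟨y, hy⟩
      simpa using congrArg Prod.fst (e.symm.injective hy)
    · have : (Prod.snd ∘ e) '' range (fun x => e.symm (true, x)) = Set.univ :=
        eq_univ_of_forall fun y => ⟨_, mem_range_self y, by simp⟩
      rw [this, compl_univ, mk_eq_zero]
      exact zero_lt_one.trans_le hl

theorem exists_mem_monE_notMem_monA_forall_notMem_monG :
    ∃ f, f ∈ monE X ∧ f ∉ monA X ∧ ∀ l, 1 ≤ l → l ≤ #X → f ∉ monG X l := by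
  obtain ⟨f, hf, hsurj⟩ := exists_largeFibred_surjective (α := X) (β := X) le_rfl
  refine ⟨f, mem_monE_of_surjective hsurj, hf.notMem_monA ?_, fun l hl hlX => hf.notMem_monG hlX ?_⟩
  · rw [hsurj.range_eq, mk_univ]
  · rw [hsurj.range_eq, compl_univ, mk_eq_zero]
    exact zero_lt_one.trans_le hl

theorem exists_forall_mem_monG_notMem_monA_notMem_monF :
    ∃ f, (∀ l ≤ #X, f ∈ monG X l) ∧ f ∉ monA X ∧ f ∉ monF X := by
  obtain ⟨j, hj, hjc⟩ := exists_injective_le_mk_compl_range (α := X) (le_refl #X)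
  obtain ⟨f, hf, hfj⟩ := exists_largeFibred_range_eq (range_nonempty j) (mk_set_le _)
  rw [← hfj] at hjc
  exact ⟨f, fun l hl => mem_monG_of_le_mk_compl_range (hl.trans hjc),
    hf.notMem_monA (hfj ▸ (mk_range_eq j hj).ge),
    notMem_monF hjc (hfj ▸ image_univ ▸ nontrivial_univ.image hj)⟩

end Witnesses

end Monoids

section Admissible

variable {X : Type u} {q : X → X → X} {l : Cardinal.{u}}

theorem preimage_singleton_subset_of_injective (hq : Injective fun v : X × X => q v.1 v.2)
    (g₁ g₂ : X → X) (x : X) : (fun z => q (g₁ z) (g₂ z)) ⁻¹' {q (g₁ x) (g₂ x)} ⊆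
      g₁ ⁻¹' {g₁ x} ∩ g₂ ⁻¹' {g₂ x} := fun z hz =>
  Prod.mk.inj (hq (a₁ := (g₁ z, g₂ z)) (a₂ := (g₁ x, g₂ x)) hz)

theorem binaryOp_mem_pol1_monA [Infinite X] (hq : Injective fun v : X × X => q v.1 v.2) :
    binaryOp q ∈ Pol1 (monA X) := by
  refine binaryOp_mem_pol1.2 fun g₁ h₁ g₂ h₂ => mem_monA.2 ?_
  rw [mem_monA] at h₁ h₂
  have small := mul_lt_of_lt (aleph0_le_mk X) h₁ h₂
  rw [← mk_setProd] at small
  refine (mk_le_mk_of_subset fun y hy => ?_).trans_lt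
    ((mk_image_le (f := fun v : X × X => q v.1 v.2)).trans_lt small)
  rw [mem_ofPred_eq] at hy
  obtain ⟨x, rfl⟩ := nonempty_of_le_mk (aleph0_le_mk X) hy
  have fiber_subset := preimage_singleton_subset_of_injective hq g₁ g₂ x
  exact ⟨(g₁ x, g₂ x),
    ⟨hy.trans (mk_le_mk_of_subset fun _ hz => (fiber_subset hz).1),
      hy.trans (mk_le_mk_of_subset fun _ hz => (fiber_subset hz).2)⟩, rfl⟩

theorem binaryOp_mem_pol1_monB [Infinite X] (hq : Injective fun v : X × X => q v.1 v.2) :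
    binaryOp q ∈ Pol1 (monB X) := by
  refine binaryOp_mem_pol1.2 fun g₁ h₁ g₂ _ y => ?_
  rcases ((fun x => q (g₁ x) (g₂ x)) ⁻¹' {y}).eq_empty_or_nonempty with hy | ⟨x, rfl⟩
  · rw [hy, mk_eq_zero]
    exact aleph0_pos.trans_le (aleph0_le_mk X)
  · exact (mk_le_mk_of_subset ((preimage_singleton_subset_of_injective hq g₁ g₂ x).trans
      inter_subset_left)).trans_lt (h₁ (g₁ x))

theorem isAdmissibleMonoid_monA [Fact (#X).IsRegular] : IsAdmissibleMonoid (monA X) where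
  perm_mem γ := monB_subset_monA (mk_fiber_lt_of_injective γ.injective)
  comp_mem {f g} hf hg := by
    rw [mem_monA] at *
    refine (mk_le_mk_of_subset fun y hy => ?_).trans_lt <|
      mk_union_lt (aleph0_le_mk X) hf ((mk_image_le (f := f)).trans_lt hg)
    rw [mem_ofPred_eq, preimage_comp] at hy
    by_contra! hcon
    rw [mem_union, not_or] at hcon
    refine (mk_preimage_lt (f := g) Fact.out (not_le.1 hcon.1) fun z hz => ?_).not_ge hy
    exact not_le.1 fun hgz => hcon.2 ⟨z, hgz, hz⟩
  ne_univ := by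
    obtain ⟨f, -, hf, -⟩ := exists_mem_monE_notMem_monA_forall_notMem_monG (X := X)
    exact (ne_univ_iff_exists_notMem _).2 ⟨f, hf⟩
  exists_binaryOp_mem := by
    obtain ⟨q, hq, -⟩ := exists_injective_binary_le_mk_compl_range (X := X)
    exact ⟨q, ⟨id, hq⟩, binaryOp_mem_pol1_monA hq⟩

theorem isAdmissibleMonoid_monB [Fact (#X).IsRegular] : IsAdmissibleMonoid (monB X) where
  perm_mem γ := mk_fiber_lt_of_injective γ.injective
  comp_mem {_ g} hf hg y := mk_preimage_lt (f := g) Fact.out (hf y) fun z _ => hg z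
  ne_univ := (ne_univ_iff_exists_notMem _).2 ⟨_, const_notMem_monB (Classical.arbitrary X)⟩
  exists_binaryOp_mem := by
    obtain ⟨q, hq, -⟩ := exists_injective_binary_le_mk_compl_range (X := X)
    exact ⟨q, ⟨id, hq⟩, binaryOp_mem_pol1_monB hq⟩

section Infinite

variable [Infinite X]

variable (X) in
theorem exists_mk_compl_image_lt_and_le_mk_compl :
    ∃ (U : Set X) (s : X → X), #((s '' U)ᶜ : Set X) < #X ∧ #X ≤ #(Uᶜ : Set X) := by
  obtain ⟨j, hj, hjc⟩ := exists_injective_le_mk_compl_range (α := X) (le_refl #X)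
  refine ⟨range j, invFun j, ?_, hjc⟩
  rw [← range_comp, invFun_comp hj, range_id, compl_univ, mk_eq_zero]
  exact aleph0_pos.trans_le (aleph0_le_mk X)

-- Off `U` there is still room for a square on which `p` is injective, while each of the unary
-- functions `x ↦ p (g x) y` and `x ↦ p c (g x)`, `c ∉ U`, agrees with `s ∘ g` on `g ⁻¹' U`.
theorem exists_injectiveOnLargeSquare_forall_mem_eq {U : Set X} (hU : #X ≤ #(Uᶜ : Set X))
    (s : X → X) : ∃ p : X → X → X, InjectiveOnLargeSquare p ∧ (∀ x ∈ U, ∀ y, p x y = s x) ∧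
      ∀ x ∉ U, ∀ y ∈ U, p x y = s y := by
  classical
  obtain ⟨e⟩ := Cardinal.eq.1 (mk_eq_of_le_mk hU).symm
  obtain ⟨q, hq, -⟩ := exists_injective_binary_le_mk_compl_range (X := X)
  refine ⟨fun x y => if x ∈ U then s x else if y ∈ U then s y else q x y, ⟨fun x => e x, ?_⟩,
    fun x hx y => if_pos hx, fun x hx y hy => (if_neg hx).trans (if_pos hy)⟩
  have e_notMem (x : X) : (e x : X) ∉ U := (e x).2
  simp only [e_notMem, if_false]
  have he := Subtype.val_injective.comp e.injective
  exact hq.comp (he.prodMap he)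

theorem comp_mem_monE {f g : X → X} (hf : f ∈ monE X) (hg : g ∈ monE X) : f ∘ g ∈ monE X :=
  mem_monE_of_eq_on_preimage (U := Set.univ) (by rwa [image_univ]) hg fun _ _ => rfl

theorem isAdmissibleMonoid_monE : IsAdmissibleMonoid (monE X) where
  perm_mem γ := mem_monE_of_surjective γ.surjective
  comp_mem := comp_mem_monE
  ne_univ := by
    obtain ⟨f, -, hf, -⟩ := exists_mem_monB_notMem_monE_notMem_monF (X := X)
    exact (ne_univ_iff_exists_notMem _).2 ⟨f, hf⟩
  exists_binaryOp_mem := by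
    obtain ⟨U, s, hs, hU⟩ := exists_mk_compl_image_lt_and_le_mk_compl X
    obtain ⟨p, hp, hp₁, -⟩ := exists_injectiveOnLargeSquare_forall_mem_eq hU s
    exact ⟨p, hp, binaryOp_mem_pol1.2 fun g₁ h₁ g₂ _ => mem_monE_of_eq_on_preimage
      hs h₁ fun z hz => hp₁ _ hz _⟩

theorem isAdmissibleMonoid_monF : IsAdmissibleMonoid (monF X) where
  perm_mem γ := .inl (mem_monE_of_surjective γ.surjective)
  comp_mem {f _} hf hg := by
    rcases hf, hg with ⟨hf | ⟨c, hc⟩, hg | ⟨d, hd⟩⟩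
    · exact .inl (comp_mem_monE hf hg)
    · exact .inr ⟨f d, fun x => congrArg f (hd x)⟩
    · exact .inr ⟨c, fun x => hc _⟩
    · exact .inr ⟨c, fun x => hc _⟩
  ne_univ := by
    obtain ⟨f, -, hf⟩ := exists_mem_monA_notMem_monF (X := X)
    exact (ne_univ_iff_exists_notMem _).2 ⟨f, hf⟩
  exists_binaryOp_mem := by
    obtain ⟨U, s, hs, hU⟩ := exists_mk_compl_image_lt_and_le_mk_compl X
    obtain ⟨p, hp, hp₁, hp₂⟩ := exists_injectiveOnLargeSquare_forall_mem_eq hU s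
    refine ⟨p, hp, binaryOp_mem_pol1.2 fun g₁ h₁ g₂ h₂ => ?_⟩
    rcases h₁ with h₁ | ⟨c, hc⟩
    · exact .inl (mem_monE_of_eq_on_preimage hs h₁ fun z hz => hp₁ _ hz _)
    obtain rfl := funext hc
    by_cases hcU : c ∈ U
    · exact .inr ⟨s c, fun x => hp₁ c hcU _⟩
    rcases h₂ with h₂ | ⟨d, hd⟩
    · exact .inl (mem_monE_of_eq_on_preimage hs h₂ fun z hz => hp₂ c hcU _ hz)
    · exact .inr ⟨p c d, fun x => congrArg (p c) (hd x)⟩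

theorem isAdmissibleMonoid_monG (hl : 1 ≤ l) (hlX : l ≤ #X) : IsAdmissibleMonoid (monG X l) where
  perm_mem γ A hA := by
    rw [image_compl_eq γ.bijective, compl_compl, mk_image_eq γ.injective, hA]
  comp_mem {f g} hf hg A hA := by
    obtain ⟨z, hz, hzl⟩ := le_mk_iff_exists_subset.1 (hg A hA)
    refine (hf z hzl).trans (mk_le_mk_of_subset (compl_subset_compl.2 ?_))
    rw [image_comp]
    exact image_mono (subset_compl_comm.1 hz)
  ne_univ := by
    obtain ⟨f, -, -, hf⟩ := exists_mem_monE_notMem_monA_forall_notMem_monG (X := X)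
    exact (ne_univ_iff_exists_notMem _).2 ⟨f, hf l hl hlX⟩
  exists_binaryOp_mem := by
    obtain ⟨q, hq, hqc⟩ := exists_injective_binary_le_mk_compl_range (X := X)
    refine ⟨q, ⟨id, hq⟩, binaryOp_mem_pol1.2 fun g₁ _ g₂ _ => mem_monG_of_le_mk_compl_range ?_⟩
    exact hlX.trans <| hqc.trans <| mk_le_mk_of_subset <| compl_subset_compl.2 <|
      range_subset_iff.2 fun x => ⟨(g₁ x, g₂ x), rfl⟩

end Infinite

theorem isAdmissibleMonoid_of_mem_criticalMonoids [Fact (#X).IsRegular] {G : Set (X → X)}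
    (hG : G ∈ criticalMonoids X) : IsAdmissibleMonoid G := by
  rcases hG with rfl | rfl | rfl | rfl | ⟨l, hl, hlX, rfl⟩
  exacts [isAdmissibleMonoid_monA, isAdmissibleMonoid_monB, isAdmissibleMonoid_monE,
    isAdmissibleMonoid_monF, isAdmissibleMonoid_monG hl hlX]

end Admissible

section Separation

variable {X : Type u} {G G' : Set (X → X)} {l m : Cardinal.{u}}

theorem IsAdmissibleMonoid.subset_of_pol1_subset (hG : IsAdmissibleMonoid G)
    (hG' : IsAdmissibleMonoid G') (h : Pol1 G ⊆ Pol1 G') : G ⊆ G' := fun _ hg =>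
  hG'.unaryOp_mem_pol1.1 (h (hG.unaryOp_mem_pol1.2 hg))

theorem binaryOp_mem_pol1_monG {p : X → X → X} {A : Set X} (hA : #A < l) (hl : l ≤ #X)
    (hp : ∀ y ∉ A, #X ≤ #{z | ∀ x y', p x y' = z → y' = y}) : binaryOp p ∈ Pol1 (monG X l) := by
  refine binaryOp_mem_pol1.2 fun g₁ _ g₂ h₂ B hB => ?_
  obtain ⟨y, hy, hyA⟩ := sdiff_nonempty_of_mk_lt_mk (hA.trans_le (h₂ B hB))
  refine (hl.trans (hp y hyA)).trans (mk_le_mk_of_subset fun z hz => ?_)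
  rintro ⟨x, hx, hxz⟩
  exact hy ⟨x, hx, hz _ _ hxz⟩

section Infinite

variable [Infinite X]

theorem not_pol1_monE_subset_pol1_monF : ¬ Pol1 (monE X) ⊆ Pol1 (monF X) := by
  classical
  intro h
  obtain ⟨U, s, hs, hU⟩ := exists_mk_compl_image_lt_and_le_mk_compl X
  obtain ⟨v, hv⟩ := nonempty_of_le_mk (aleph0_le_mk X) hU
  obtain ⟨r, -, hr⟩ := exists_mem_monA_notMem_monF (X := X)
  have hp : binaryOp (fun x y => if y ∈ U then s y else r x) ∈ Pol1 (monE X) :=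
    binaryOp_mem_pol1.2 fun _ _ _ h₂ => mem_monE_of_eq_on_preimage hs h₂ fun _ hz => if_pos hz
  have := binaryOp_mem_pol1.1 (h hp) id (isAdmissibleMonoid_monF.perm_mem (Equiv.refl X))
    (fun _ => v) (.inr ⟨v, fun _ => rfl⟩)
  simp only [if_neg hv, id] at this
  exact hr this

theorem exists_pairing_of_le_mk_compl {A : Set X} (hA : #X ≤ #(Aᶜ : Set X)) :
    ∃ (p : X → X → X) (u w : X → X), (∀ x, p (u x) (w x) = x) ∧
      #X ≤ #((range u)ᶜ : Set X) ∧ (∀ x, w x ∉ A) ∧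
      ∀ y ∉ A, #X ≤ #{z | ∀ x y', p x y' = z → y' = y} := by
  classical
  obtain ⟨j, hj, hjc⟩ := exists_injective_le_mk_compl_range (α := X) (le_refl #X)
  have : Nonempty ↥Aᶜ := (nonempty_of_le_mk (aleph0_le_mk X) hA).to_subtype
  obtain ⟨e⟩ := Cardinal.eq.1 (mk_prod_eq_left (mk_set_le Aᶜ))
  let z₀ := Classical.arbitrary X
  let p (x y : X) : X := if hy : y ∈ Aᶜ then e (invFun j x, ⟨y, hy⟩) else z₀
  have hp {x y} (hy : y ∈ Aᶜ) : p x y = e (invFun j x, ⟨y, hy⟩) := dif_pos hy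
  refine ⟨p, fun x => j (e.symm x).1, fun x => (e.symm x).2, fun x => ?_, ?_,
    fun x => (e.symm x).2.2, fun y hy => ?_⟩
  · rw [hp (e.symm x).2.2, leftInverse_invFun hj]
    exact e.apply_symm_apply x
  · exact hjc.trans <| mk_le_mk_of_subset <| compl_subset_compl.2 <|
      range_subset_iff.2 fun x => mem_range_self _
  · have column_injective : Injective fun x => e (x, ⟨y, hy⟩) :=
      e.injective.comp (Prod.mk_left_injective _)
    have small : #({z₀} : Set X) < #X :=
      (finite_singleton z₀).lt_aleph0.trans_le (aleph0_le_mk X)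
    refine (le_mk_sdiff (aleph0_le_mk X) (mk_range_eq _ column_injective).ge small).trans <|
      mk_le_mk_of_subset ?_
    rintro _ ⟨⟨x, rfl⟩, hx⟩ x' y' hxy
    by_cases hy' : y' ∈ Aᶜ
    · rw [hp hy'] at hxy
      exact congrArg (fun v => (v.2 : X)) (e.injective hxy)
    · exact absurd (hxy.symm.trans (dif_neg hy')) hx

-- For `|A| = l` the pairing preserves `monG X m`, because a second component missing `m` points
-- misses some `y ∉ A`; but every `t` is paired from `u ∘ t` and `w ∘ t`, which are in `monG X l`.
theorem not_pol1_monG_subset_pol1_monG_of_lt (hl : 1 ≤ l) (hlm : l < m) (hm : m ≤ #X) :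
    ¬ Pol1 (monG X m) ⊆ Pol1 (monG X l) := by
  intro h
  have hlX := hlm.le.trans hm
  obtain ⟨A, -, hAl, hA⟩ := exists_mk_eq_le_mk_compl (mk_univ.ge.trans' hlX) hlX
  obtain ⟨p, u, w, hp, hu, hw, hcol⟩ := exists_pairing_of_le_mk_compl hA
  obtain ⟨t, -, -, ht⟩ := exists_mem_monE_notMem_monA_forall_notMem_monG (X := X)
  have hut : u ∘ t ∈ monG X l := mem_monG_of_le_mk_compl_range <| hlX.trans <| hu.trans <|
    mk_le_mk_of_subset <| compl_subset_compl.2 <| range_comp_subset_range t u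
  have hwt : w ∘ t ∈ monG X l := mem_monG_of_le_mk_compl_range <| hAl.ge.trans <|
    mk_le_mk_of_subset <| subset_compl_comm.1 <| range_subset_iff.2 fun x => hw (t x)
  have hpG := binaryOp_mem_pol1_monG (hAl.trans_lt hlm) hm hcol
  have hpt := binaryOp_mem_pol1.1 (h hpG) _ hut _ hwt
  simp only [comp_apply, hp] at hpt
  exact ht l hl hlX hpt

theorem not_monG_subset_monG_of_lt (hlm : l < m) (hm : m ≤ #X) : ¬ monG X l ⊆ monG X m := by
  intro h
  have hlX := hlm.le.trans hm
  obtain ⟨A, -, hAl, hA⟩ := exists_mk_eq_le_mk_compl (mk_univ.ge.trans' hlX) hlX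
  obtain ⟨t, ht, hrange⟩ :=
    exists_largeFibred_range_eq (nonempty_of_le_mk (aleph0_le_mk X) hA) (mk_set_le _)
  have hc : #((range t)ᶜ : Set X) = l := by rw [hrange, compl_compl, hAl]
  exact ht.notMem_monG hm (hc.trans_lt hlm) (h (mem_monG_of_le_mk_compl_range hc.ge))

end Infinite

variable [Fact (#X).IsRegular]

theorem not_pol1_monB_subset_pol1_monA : ¬ Pol1 (monB X) ⊆ Pol1 (monA X) := by
  classical
  intro h
  let c := Classical.arbitrary X
  obtain ⟨s, -, hs, -⟩ := exists_mem_monE_notMem_monA_forall_notMem_monG (X := X)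
  obtain ⟨q, hq, -⟩ := exists_injective_binary_le_mk_compl_range (X := X)
  have hp : binaryOp (fun x y => if y = c then s x else q x y) ∈ Pol1 (monB X) := by
    refine binaryOp_mem_pol1.2 fun g₁ h₁ g₂ h₂ y => (mk_le_mk_of_subset fun x hx => ?_).trans_lt <|
      mk_union_lt (aleph0_le_mk X) (h₂ c)
        (binaryOp_mem_pol1.1 (binaryOp_mem_pol1_monB hq) g₁ h₁ g₂ h₂ y)
    by_cases hxc : g₂ x = c
    · exact .inl hxc
    · exact .inr ((if_neg hxc).symm.trans hx)
  have := binaryOp_mem_pol1.1 (h hp) id (isAdmissibleMonoid_monA.perm_mem (Equiv.refl X))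
    (fun _ => c) (const_mem_monA c)
  simp only [if_true, id] at this
  exact hs this

theorem monA_eq_of_pol1_subset (hG : G ∈ criticalMonoids X) (h : Pol1 (monA X) ⊆ Pol1 G) :
    monA X = G := by
  have hsub := isAdmissibleMonoid_monA.subset_of_pol1_subset
    (isAdmissibleMonoid_of_mem_criticalMonoids hG) h
  have const_mem := hsub (const_mem_monA (Classical.arbitrary X))
  obtain ⟨f, hfA, hfF⟩ := exists_mem_monA_notMem_monF (X := X)
  rcases hG with rfl | rfl | rfl | rfl | ⟨l, hl, hlX, rfl⟩
  · rfl
  · exact absurd const_mem (const_notMem_monB _)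
  · exact absurd (.inl (hsub hfA)) hfF
  · exact absurd (hsub hfA) hfF
  · obtain ⟨g, hgB, hgG⟩ := exists_mem_monB_forall_notMem_monG (X := X)
    exact absurd (hsub (monB_subset_monA hgB)) (hgG l hl hlX)

theorem monB_eq_of_pol1_subset (hG : G ∈ criticalMonoids X) (h : Pol1 (monB X) ⊆ Pol1 G) :
    monB X = G := by
  have hsub := isAdmissibleMonoid_monB.subset_of_pol1_subset
    (isAdmissibleMonoid_of_mem_criticalMonoids hG) h
  obtain ⟨f, hfB, hfE, hfF⟩ := exists_mem_monB_notMem_monE_notMem_monF (X := X)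
  rcases hG with rfl | rfl | rfl | rfl | ⟨l, hl, hlX, rfl⟩
  · exact absurd h not_pol1_monB_subset_pol1_monA
  · rfl
  · exact absurd (hsub hfB) hfE
  · exact absurd (hsub hfB) hfF
  · obtain ⟨g, hgB, hgG⟩ := exists_mem_monB_forall_notMem_monG (X := X)
    exact absurd (hsub hgB) (hgG l hl hlX)

theorem monE_eq_of_pol1_subset (hG : G ∈ criticalMonoids X) (h : Pol1 (monE X) ⊆ Pol1 G) :
    monE X = G := by
  have hsub := isAdmissibleMonoid_monE.subset_of_pol1_subset
    (isAdmissibleMonoid_of_mem_criticalMonoids hG) h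
  obtain ⟨f, hfE, hfA, hfG⟩ := exists_mem_monE_notMem_monA_forall_notMem_monG (X := X)
  rcases hG with rfl | rfl | rfl | rfl | ⟨l, hl, hlX, rfl⟩
  · exact absurd (hsub hfE) hfA
  · exact absurd (monB_subset_monA (hsub hfE)) hfA
  · rfl
  · exact absurd h not_pol1_monE_subset_pol1_monF
  · exact absurd (hsub hfE) (hfG l hl hlX)

theorem monF_eq_of_pol1_subset (hG : G ∈ criticalMonoids X) (h : Pol1 (monF X) ⊆ Pol1 G) :
    monF X = G := by
  have hsub := isAdmissibleMonoid_monF.subset_of_pol1_subset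
    (isAdmissibleMonoid_of_mem_criticalMonoids hG) h
  obtain ⟨f, hfE, hfA, hfG⟩ := exists_mem_monE_notMem_monA_forall_notMem_monG (X := X)
  have hf := hsub (.inl hfE)
  rcases hG with rfl | rfl | rfl | rfl | ⟨l, hl, hlX, rfl⟩
  · exact absurd hf hfA
  · exact absurd (monB_subset_monA hf) hfA
  · exact absurd (hsub (.inr ⟨Classical.arbitrary X, fun _ => rfl⟩)) (const_notMem_monE _)
  · rfl
  · exact absurd hf (hfG l hl hlX)

theorem monG_eq_of_pol1_subset (hl : 1 ≤ l) (hlX : l ≤ #X) (hG : G ∈ criticalMonoids X)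
    (h : Pol1 (monG X l) ⊆ Pol1 G) : monG X l = G := by
  have hsub := (isAdmissibleMonoid_monG hl hlX).subset_of_pol1_subset
    (isAdmissibleMonoid_of_mem_criticalMonoids hG) h
  obtain ⟨f, hfG, hfA, hfF⟩ := exists_forall_mem_monG_notMem_monA_notMem_monF (X := X)
  have hf := hsub (hfG l hlX)
  rcases hG with rfl | rfl | rfl | rfl | ⟨m, hm, hmX, rfl⟩
  · exact absurd hf hfA
  · exact absurd (monB_subset_monA hf) hfA
  · exact absurd (.inl hf) hfF
  · exact absurd hf hfF
  · rcases lt_trichotomy l m with hlm | rfl | hml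
    · exact absurd hsub (not_monG_subset_monG_of_lt hlm hmX)
    · rfl
    · exact absurd h (not_pol1_monG_subset_pol1_monG_of_lt hm hml hlX)

theorem eq_of_pol1_subset (hG : G ∈ criticalMonoids X) (hG' : G' ∈ criticalMonoids X)
    (h : Pol1 G ⊆ Pol1 G') : G = G' := by
  rcases hG with rfl | rfl | rfl | rfl | ⟨l, hl, hlX, rfl⟩
  exacts [monA_eq_of_pol1_subset hG' h, monB_eq_of_pol1_subset hG' h, monE_eq_of_pol1_subset hG' h,
    monF_eq_of_pol1_subset hG' h, monG_eq_of_pol1_subset hl hlX hG' h]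

end Separation

/-- **Heindorf; Pinsker**: on a set of regular cardinality, the precomplete clones
containing all permutations but not all unary operations are exactly the polymorphism
clones of the monoids `A, B, E, F` and `G_λ` (`1 ≤ λ ≤ |X|`). -/
theorem stmt10 {X : Type u} (hreg : (#X).IsRegular) (C : Set (Ops X)) :
    (IsPrecompleteClone C ∧ (∀ γ : Equiv.Perm X, unaryOp ⇑γ ∈ C) ∧
      ¬ (∀ F : X → X, unaryOp F ∈ C)) ↔
    ∃ G : Set (X → X),
      (G = monA X ∨ G = monB X ∨ G = monE X ∨ G = monF X ∨
        ∃ lam : Cardinal.{u}, 1 ≤ lam ∧ lam ≤ #X ∧ G = monG X lam) ∧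
      C = Pol1 G := by
  have : Fact (#X).IsRegular := ⟨hreg⟩
  constructor
  · rintro ⟨hC, hperm, hU⟩
    exact hC.exists_eq_pol1 hperm hU fun G => isAdmissibleMonoid_of_mem_criticalMonoids
  · rintro ⟨G, hG, rfl⟩
    have hadm := isAdmissibleMonoid_of_mem_criticalMonoids hG
    obtain ⟨g, hg⟩ := hadm.exists_unaryOp_notMem_pol1
    exact ⟨hadm.isPrecompleteClone_pol1 fun G' hG' => eq_of_pol1_subset hG hG',
      fun γ => hadm.unaryOp_mem_pol1.2 (hadm.perm_mem γ), fun hU => hg (hU g)⟩
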